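/- For every k ∈ ℕ and every p ∈ (p_k, 1/2], the critical value q_c(p) of anisotropic bond percolation on the slab S^k satisfies q_c(p) < 1. -/

import Mathlib

open MeasureTheory Set
open scoped ENNReal

namespace AnisoSlab

/-! ### A concrete construction of countable products of Bernoulli measures

The product Bernoulli measure on `ι → Bool` (each coordinate `i` open with
probability `P i`, independently) is realized as the pushforward of Lebesgue
measure on `[0,1)`: the binary digits of a uniform sample are i.i.d. fair
coins; regrouping them along a pairing function yields countably many
independent uniform samples, and comparing the `i`-th sample with `P i`
yields the desired independent Bernoulli coordinates. -/

/-- The `n`-th binary digit of `x` (digits after the binary point). -/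
noncomputable def binDigit (n : ℕ) (x : ℝ) : Bool :=
  decide (⌊x * 2 ^ (n + 1)⌋ % 2 = 1)

/-- Countably many independent uniform-`[0,1]` samples extracted from a single
uniform sample `x` on `[0,1)`, by regrouping its binary digits. -/
noncomputable def unifSample (i : ℕ) (x : ℝ) : ℝ :=
  ∑' n : ℕ, if binDigit (Nat.pair i n) x then ((2 : ℝ) ^ (n + 1))⁻¹ else 0

/-- The product Bernoulli measure on `ι → Bool`, coordinate `i` being `true`
with probability `P i`, independently over `i`. -/
noncomputable def bernoulliProduct {ι : Type*} [Encodable ι] (P : ι → ℝ) :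
    Measure (ι → Bool) :=
  Measure.map (fun x i => decide (unifSample (Encodable.encode i) x < P i))
    (volume.restrict (Set.Ico (0 : ℝ) 1))

/-! ### The slab `S^k` and anisotropic bond percolation on it -/

/-- Ambient vertices: `ℤ³`; the slab `S^k` uses those with third coordinate in `{0, …, k}`. -/
abbrev Vtx : Type := ℤ × ℤ × ℤ

/-- The three unit coordinate vectors. -/
def dvec : Fin 3 → Vtx
  | 0 => (1, 0, 0)
  | 1 => (0, 1, 0)
  | 2 => (0, 0, 1)

/-- A bond is indexed by its lower endpoint `v` and a direction `i`; it joins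
`v` to `v + dvec i`. Directions `0, 1` give radial (horizontal) bonds, and
direction `2` gives axial (vertical) bonds. -/
abbrev EdgeIdx : Type := Vtx × Fin 3

/-- A percolation configuration: each bond is open (`true`) or closed (`false`). -/
abbrev Config : Type := EdgeIdx → Bool

/-- `v` is a vertex of the slab `S^k`. -/
def InSlab (k : ℕ) (v : Vtx) : Prop := 0 ≤ v.2.2 ∧ v.2.2 ≤ k

/-- `(v, i)` is a bond of the slab `S^k` (both endpoints lie in the slab). -/
def IsEdge (k : ℕ) (e : EdgeIdx) : Prop := InSlab k e.1 ∧ InSlab k (e.1 + dvec e.2)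

/-- The measure `P_{p,q}` on configurations of `S^k`: each radial (horizontal)
bond is open with probability `p` and each axial (vertical) bond is open with
probability `q`, independently. -/
noncomputable def slabMeasure (k : ℕ) (p q : ℝ) : Measure Config :=
  bernoulliProduct (fun e => if e.2 = 2 then q else p)

/-- `x` and `y` are joined by an open bond of `S^k` in the configuration `ω`. -/
def OpenAdj (k : ℕ) (ω : Config) (x y : Vtx) : Prop :=
  ∃ i : Fin 3,
    (y = x + dvec i ∧ IsEdge k (x, i) ∧ ω (x, i) = true) ∨
    (x = y + dvec i ∧ IsEdge k (y, i) ∧ ω (y, i) = true)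

/-- The open cluster of the vertex `x` in the configuration `ω`. -/
def cluster (k : ℕ) (ω : Config) (x : Vtx) : Set Vtx :=
  {y | Relation.ReflTransGen (OpenAdj k ω) x y}

/-- The percolation function `θ(p,q) = P_{p,q}(0 ↔ ∞)`. -/
noncomputable def theta (k : ℕ) (p q : ℝ) : ℝ≥0∞ :=
  slabMeasure k p q {ω | (cluster k ω 0).Infinite}

/-- `p_k = 1 - (1/2)^{1/(k+1)}`, the horizontal critical value at `q = 1`. -/
noncomputable def pCrit (k : ℕ) : ℝ := 1 - (1 / 2 : ℝ) ^ ((1 : ℝ) / (k + 1))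

/-- The critical curve `q_c(p) = sup {q ∈ [0,1] : θ(p,q) = 0}`. -/
noncomputable def qc (k : ℕ) (p : ℝ) : ℝ :=
  sSup {q : ℝ | q ∈ Set.Icc (0 : ℝ) 1 ∧ theta k p q = 0}

/-- The critical curve `p_c(q) = sup {p ∈ [0,1] : θ(p,q) = 0}`. -/
noncomputable def pc (k : ℕ) (q : ℝ) : ℝ :=
  sSup {p : ℝ | p ∈ Set.Icc (0 : ℝ) 1 ∧ theta k p q = 0}

/-! On `ℤ²` the probability at `p = 1/2` that the cluster of the origin leaves a box of radius `n`
is at least `1 / (2 n + 3)` by planar duality, so by the Simon–Lieb inequality the functional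
`φ_{1/2}` of Duminil-Copin and Tassion is at least `1` on every finite set containing the origin,
and their differential inequality gives percolation for every `p > 1/2`. To compare, give each
vertical edge of the slab four independent shares of density `t`, one for each planar edge at its
base point, so that `q = 1 - (1 - t)^4`, and declare a planar edge open if one of the `k + 1`
horizontal edges above it is open, as well as its `2 k` shares in the two columns at its ends.
Planar edges are then independent of density `(1 - (1 - p)^(k+1)) t^(2k)`, which exceeds `1/2` for
`t` close to `1` exactly when `p > p_k`, and an infinite planar cluster yields an infinite cluster
of the slab. -/

/-! ### The law of `bernoulliProduct` -/

section UniformBits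

/-- The uniform law on `[0, 1)`. -/
noncomputable def unitUniform : Measure ℝ := volume.restrict (Ico 0 1)

instance : IsProbabilityMeasure unitUniform := ⟨by simp [unitUniform]⟩

/-- The Bernoulli law of parameter `p` clipped to `[0, 1]`, realised as the law of the indicator of
`u < p` for a uniform `u`, as in `bernoulliProduct`. -/
noncomputable def coin (p : ℝ) : Measure Bool := unitUniform.map fun u => decide (u < p)

lemma measurable_decide_lt (p : ℝ) : Measurable fun u : ℝ => decide (u < p) :=
  measurable_to_bool (by
    convert! (measurableSet_Iio : MeasurableSet (Iio p)) using 1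
    ext; simp)

instance (p : ℝ) : IsProbabilityMeasure (coin p) :=
  Measure.isProbabilityMeasure_map (measurable_decide_lt p).aemeasurable

lemma coin_real_true {p : ℝ} (hp : p ∈ Icc (0 : ℝ) 1) : (coin p).real {true} = p := by
  have hpre : (fun u : ℝ => decide (u < p)) ⁻¹' {true} = Iio p := by ext; simp
  rw [coin, map_measureReal_apply (measurable_decide_lt p) (.of_discrete), hpre, unitUniform,
    measureReal_restrict_apply measurableSet_Iio, inter_comm, Ico_inter_Iio, min_eq_right hp.2]
  simp [hp.1]

lemma real_false_eq_one_sub (μ : Measure Bool) [IsProbabilityMeasure μ] :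
    μ.real {false} = 1 - μ.real {true} := by
  rw [← probReal_compl_eq_one_sub .of_discrete]
  congr 1
  ext b
  simp

lemma measure_bool_ext {μ ν : Measure Bool} [IsProbabilityMeasure μ] [IsProbabilityMeasure ν]
    (h : μ.real {true} = ν.real {true}) : μ = ν :=
  Measure.ext_of_measureReal_singleton fun b => by
    cases b
    · rw [real_false_eq_one_sub, real_false_eq_one_sub, h]
    · exact h

lemma coin_real_false {p : ℝ} (hp : p ∈ Icc (0 : ℝ) 1) : (coin p).real {false} = 1 - p := by
  rw [real_false_eq_one_sub, coin_real_true hp]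

lemma coin_half_singleton (b : Bool) : coin (1 / 2) {b} = ENNReal.ofReal (1 / 2) := by
  have h : (1 / 2 : ℝ) ∈ Icc (0 : ℝ) 1 := by norm_num
  rw [← ofReal_measureReal]
  cases b
  · rw [coin_real_false h]; norm_num
  · rw [coin_real_true h]

lemma measurable_binDigit (n : ℕ) : Measurable (binDigit n) := by
  have hpre : binDigit n ⁻¹' {true} = (fun x : ℝ => ⌊x * 2 ^ (n + 1)⌋) ⁻¹' {z | z % 2 = 1} := by
    ext; simp [binDigit]
  refine measurable_to_bool (hpre ▸ ?_)
  exact Int.measurable_floor.comp (measurable_id.mul_const _) .of_discrete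

/-- The integer whose binary expansion is `w 0, …, w (N - 1)`, most significant digit first. -/
def binPrefix (w : ℕ → Bool) : ℕ → ℤ
  | 0 => 0
  | N + 1 => 2 * binPrefix w N + if w N then 1 else 0

lemma binPrefix_nonneg (w : ℕ → Bool) (N : ℕ) : 0 ≤ binPrefix w N := by
  induction N with
  | zero => simp [binPrefix]
  | succ N ih => simp only [binPrefix]; split_ifs <;> lia

lemma binPrefix_add_one_le (w : ℕ → Bool) (N : ℕ) : binPrefix w N + 1 ≤ 2 ^ N := by
  induction N with
  | zero => simp [binPrefix]
  | succ N ih => simp only [binPrefix, pow_succ]; split_ifs <;> lia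

lemma binDigit_eq_iff_floor (w : ℕ → Bool) {x : ℝ} (hx : x ∈ Ico (0 : ℝ) 1) (N : ℕ) :
    (∀ n < N, binDigit n x = w n) ↔ ⌊x * 2 ^ N⌋ = binPrefix w N := by
  induction N with
  | zero => simpa [binPrefix, Int.floor_eq_zero_iff] using hx
  | succ N ih =>
    have hfloor : ⌊x * 2 ^ (N + 1)⌋ / 2 = ⌊x * 2 ^ N⌋ := by
      have h := Int.floor_div_natCast (x * 2 ^ (N + 1)) 2
      rw [pow_succ, ← mul_assoc, Nat.cast_ofNat, mul_div_cancel_right₀ _ two_ne_zero] at h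
      rw [pow_succ, ← mul_assoc, h, Nat.cast_ofNat]
    rw [Nat.forall_lt_succ_right, ih]
    simp only [binDigit, binPrefix]
    cases w N <;> simp only [decide_eq_true_eq, decide_eq_false_iff_not] <;> grind

lemma floor_mul_eq_iff {a x : ℝ} (ha : 0 < a) (z : ℤ) :
    ⌊x * a⌋ = z ↔ x ∈ Ico (z / a) ((z + 1) / a) := by
  rw [Int.floor_eq_iff, mem_Ico, div_le_iff₀ ha, lt_div_iff₀ ha]

lemma unitUniform_binDigit_eq (w : ℕ → Bool) (N : ℕ) :
    unitUniform {x | ∀ n < N, binDigit n x = w n} = ENNReal.ofReal (1 / 2) ^ N := by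
  have hpos : (0 : ℝ) < 2 ^ N := by positivity
  have hmeas : MeasurableSet {x | ∀ n < N, binDigit n x = w n} := by
    simp only [ofPred_forall]
    exact .iInter fun n => .iInter fun _ => measurable_binDigit n (.singleton (w n))
  have hsub : Ico ((binPrefix w N : ℝ) / 2 ^ N) ((binPrefix w N + 1 : ℝ) / 2 ^ N) ⊆ Ico 0 1 := by
    have h0 : (0 : ℝ) ≤ binPrefix w N := mod_cast binPrefix_nonneg w N
    have h1 : (binPrefix w N : ℝ) + 1 ≤ 2 ^ N := mod_cast binPrefix_add_one_le w N
    exact Ico_subset_Ico (by positivity) ((div_le_one hpos).2 h1)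
  have hIco : {x | ∀ n < N, binDigit n x = w n} ∩ Ico 0 1
      = Ico ((binPrefix w N : ℝ) / 2 ^ N) ((binPrefix w N + 1 : ℝ) / 2 ^ N) := by
    ext x
    rw [← floor_mul_eq_iff hpos]
    refine ⟨fun ⟨h, hx⟩ => (binDigit_eq_iff_floor w hx N).1 h, fun h => ?_⟩
    have hx := hsub ((floor_mul_eq_iff hpos _).1 h)
    exact ⟨(binDigit_eq_iff_floor w hx N).2 h, hx⟩
  rw [unitUniform, Measure.restrict_apply hmeas, hIco, Real.volume_Ico, ← sub_div,
    add_sub_cancel_left, ← one_div_pow, ENNReal.ofReal_pow (by norm_num)]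

lemma measurable_binDigits : Measurable fun (x : ℝ) n => binDigit n x :=
  measurable_pi_lambda _ measurable_binDigit

lemma unitUniform_map_binDigits :
    unitUniform.map (fun x n => binDigit n x) = Measure.infinitePi fun _ => coin (1 / 2) := by
  refine IsProjectiveLimit.unique ?_ (Measure.isProjectiveLimit_infinitePi _)
  refine (isProjectiveLimit_nat_iff (isProjectiveMeasureFamily_pi fun _ => coin (1 / 2)) _).2
    fun N => Measure.ext_of_singleton fun η => ?_
  let w : ℕ → Bool := fun n => if h : n ∈ Finset.Iic N then η ⟨n, h⟩ else false
  have hpre : (fun (x : ℝ) n => binDigit n x) ⁻¹' (Preorder.frestrictLe N ⁻¹' {η})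
      = {x | ∀ n < N + 1, binDigit n x = w n} := by
    ext x
    simp only [mem_preimage, mem_singleton_iff, funext_iff, Subtype.forall, Finset.mem_Iic,
      Preorder.frestrictLe_apply, mem_ofPred_eq, Nat.lt_succ_iff]
    exact forall₂_congr fun n hn => by simp [w, hn]
  have hmeas := Preorder.measurable_frestrictLe (X := fun _ : ℕ => Bool) N
  rw [Measure.map_map hmeas measurable_binDigits,
    Measure.map_apply (hmeas.comp measurable_binDigits) (.singleton η), preimage_comp, hpre,
    unitUniform_binDigit_eq, Measure.pi_singleton]
  simp only [coin_half_singleton, Finset.prod_const, Finset.card_univ, Fintype.card_coe,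
    Nat.card_Iic]

/-- The real number with binary digits `η` after the binary point. -/
noncomputable def ofBinDigits (η : ℕ → Bool) : ℝ := ∑' n, if η n then ((2 : ℝ) ^ (n + 1))⁻¹ else 0

lemma measurable_ofBinDigits : Measurable ofBinDigits :=
  .tsum fun n => .ite (measurableSet_eq_fun (measurable_pi_apply n) measurable_const)
    measurable_const measurable_const

lemma ofBinDigits_binDigit {x : ℝ} (hx : x ∈ Ico (0 : ℝ) 1) :
    ofBinDigits (fun n => binDigit n x) = x := by
  have hterm (n : ℕ) : (if binDigit n x then ((2 : ℝ) ^ (n + 1))⁻¹ else 0)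
      = Real.ofDigitsTerm (Real.digits x 2) n := by
    have hfloor : ((⌊x * 2 ^ (n + 1)⌋₊ : ℕ) : ℤ) = ⌊x * 2 ^ (n + 1)⌋ :=
      Int.natCast_floor_eq_floor (mul_nonneg hx.1 (by positivity))
    simp only [binDigit, Real.ofDigitsTerm, Real.digits, ← hfloor, Fin.ofNat, Nat.cast_ofNat]
    rcases Nat.mod_two_eq_zero_or_one ⌊x * 2 ^ (n + 1)⌋₊ with h | h
    · simp [show ((⌊x * 2 ^ (n + 1)⌋₊ : ℕ) : ℤ) % 2 = 0 by lia, h]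
    · simp [show ((⌊x * 2 ^ (n + 1)⌋₊ : ℕ) : ℤ) % 2 = 1 by lia, h]
  simp only [ofBinDigits, hterm]
  exact Real.ofDigits_digits one_lt_two hx

lemma map_ofBinDigits :
    (Measure.infinitePi fun _ => coin (1 / 2)).map ofBinDigits = unitUniform := by
  rw [← unitUniform_map_binDigits, Measure.map_map measurable_ofBinDigits measurable_binDigits]
  conv_rhs => rw [← Measure.map_id (μ := unitUniform)]
  refine Measure.map_congr ?_
  filter_upwards [ae_restrict_mem measurableSet_Ico] with x hx using ofBinDigits_binDigit hx

lemma measurable_unifSample : Measurable fun (x : ℝ) i => unifSample i x :=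
  measurable_pi_lambda _ fun _ =>
    measurable_ofBinDigits.comp (measurable_pi_lambda _ fun _ => measurable_binDigit _)

lemma unitUniform_map_unifSample :
    unitUniform.map (fun x i => unifSample i x) = Measure.infinitePi fun _ => unitUniform := by
  have hinj : Function.Injective fun q : ℕ × ℕ => Nat.pair q.1 q.2 := fun a b h =>
    Prod.ext (Nat.pair_eq_pair.1 h).1 (Nat.pair_eq_pair.1 h).2
  have hpair : Measurable fun (η : ℕ → Bool) (q : ℕ × ℕ) => η (Nat.pair q.1 q.2) := by fun_prop
  have hcurry := (MeasurableEquiv.curry ℕ ℕ Bool).measurable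
  have hofBin : Measurable fun (η : ℕ → ℕ → Bool) i => ofBinDigits (η i) :=
    measurable_pi_lambda _ fun i => measurable_ofBinDigits.comp (measurable_pi_apply i)
  calc unitUniform.map (fun x i => unifSample i x)
      = (((unitUniform.map fun x n => binDigit n x).map
          fun η (q : ℕ × ℕ) => η (Nat.pair q.1 q.2)).map
          (MeasurableEquiv.curry ℕ ℕ Bool)).map fun η i => ofBinDigits (η i) := by
        rw [Measure.map_map hpair measurable_binDigits,
          Measure.map_map hcurry (hpair.comp measurable_binDigits),
          Measure.map_map hofBin (hcurry.comp (hpair.comp measurable_binDigits))]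
        rfl
    _ = Measure.infinitePi fun _ => unitUniform := by
        rw [unitUniform_map_binDigits, Measure.map_infinitePi_infinitePi_of_inj hinj,
          Measure.infinitePi_map_curry fun _ _ => coin (1 / 2),
          Measure.infinitePi_map_pi _ fun _ => measurable_ofBinDigits]
        simp only [map_ofBinDigits]

/-- The configuration obtained by opening `i` when the uniform variable `u i` is below `P i`. -/
noncomputable def threshold {ι : Type*} (P : ι → ℝ) (u : ι → ℝ) : ι → Bool := fun i => u i < P i

lemma measurable_threshold {ι : Type*} (P : ι → ℝ) : Measurable (threshold P) :=
  measurable_pi_lambda _ fun i => (measurable_decide_lt (P i)).comp (measurable_pi_apply i)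

lemma infinitePi_unitUniform_map_threshold {ι : Type*} (P : ι → ℝ) :
    (Measure.infinitePi fun _ => unitUniform).map (threshold P)
      = Measure.infinitePi fun i => coin (P i) :=
  Measure.infinitePi_map_pi (f := fun i u => decide (u < P i)) _ fun i => measurable_decide_lt (P i)

theorem bernoulliProduct_eq_infinitePi {ι : Type*} [Encodable ι] (P : ι → ℝ) :
    bernoulliProduct P = Measure.infinitePi fun i => coin (P i) := by
  have hencode : Measurable fun (u : ℕ → ℝ) (i : ι) => u (Encodable.encode i) := by fun_prop
  calc bernoulliProduct P
      = ((unitUniform.map fun x i => unifSample i x).map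
          fun u (i : ι) => u (Encodable.encode i)).map (threshold P) := by
        rw [Measure.map_map hencode measurable_unifSample,
          Measure.map_map (measurable_threshold P) (hencode.comp measurable_unifSample)]
        rfl
    _ = Measure.infinitePi fun i => coin (P i) := by
        rw [unitUniform_map_unifSample,
          Measure.map_infinitePi_infinitePi_of_inj Encodable.encode_injective,
          infinitePi_unitUniform_map_threshold]

end UniformBits

/-! ### Product measures: independence, monotonicity and Russo's formula -/

section DependsOn

variable {ι : Type*} {X : ι → Type*} {A B : Set (∀ i, X i)} {I J : Set ι}

lemma dependsOn_mem_of_imp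
    (h : ∀ ω ω' : ∀ i, X i, (∀ i ∈ I, ω i = ω' i) → ω ∈ A → ω' ∈ A) :
    DependsOn (· ∈ A) I :=
  fun ω ω' hω => propext ⟨h ω ω' hω, h ω' ω fun i hi => (hω i hi).symm⟩

lemma mem_of_dependsOn (hA : DependsOn (· ∈ A) I) {ω ω' : ∀ i, X i}
    (h : ∀ i ∈ I, ω i = ω' i) (hω : ω ∈ A) : ω' ∈ A :=
  (hA h).mp hω

lemma dependsOn_inter (hA : DependsOn (· ∈ A) I) (hB : DependsOn (· ∈ B) J) :
    DependsOn (· ∈ A ∩ B) (I ∪ J) := fun _ _ h =>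
  congrArg₂ And (hA fun i hi => h i (.inl hi)) (hB fun i hi => h i (.inr hi))

variable [∀ i, MeasurableSpace (X i)]

lemma measurableSet_cylinderEvents_of_dependsOn (hA : MeasurableSet A)
    (hdep : DependsOn (· ∈ A) I) : MeasurableSet[cylinderEvents I] A := by
  classical
  obtain rfl | ⟨ω₀, -⟩ := A.eq_empty_or_nonempty
  · exact @MeasurableSet.empty _ (cylinderEvents I)
  let φ : (∀ i, X i) → ∀ i, X i := fun ω i => if i ∈ I then ω i else ω₀ i
  have hφ (i : ι) : Measurable[cylinderEvents I] fun ω => φ ω i := by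
    by_cases hi : i ∈ I
    · simpa only [φ, hi, if_true] using measurable_cylinderEvent_apply hi
    · simpa only [φ, hi, if_false] using @measurable_const _ _ _ (cylinderEvents I) (ω₀ i)
  have hpre : φ ⁻¹' A = A := by
    ext ω
    exact iff_of_eq (hdep fun i hi => if_pos hi)
  exact hpre ▸ @measurable_pi_lambda _ _ _ (cylinderEvents I) _ φ hφ _ hA

variable {μ : ∀ i, Measure (X i)} [∀ i, IsProbabilityMeasure (μ i)]

lemma infinitePi_inter_of_disjoint (hA : MeasurableSet A) (hB : MeasurableSet B)
    (hAI : DependsOn (· ∈ A) I) (hBJ : DependsOn (· ∈ B) J) (hIJ : Disjoint I J) :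
    Measure.infinitePi μ (A ∩ B) = Measure.infinitePi μ A * Measure.infinitePi μ B := by
  have hcoord : ProbabilityTheory.iIndepFun (fun i (ω : ∀ i, X i) => ω i) (Measure.infinitePi μ) :=
    ProbabilityTheory.iIndepFun_infinitePi (X := fun _ x => x) fun _ => measurable_id
  exact (ProbabilityTheory.Indep_iff _ _ _).1
    (ProbabilityTheory.indep_iSup_of_disjoint (fun i => (measurable_pi_apply i).comap_le) hcoord
      hIJ)
    A B (measurableSet_cylinderEvents_of_dependsOn hA hAI)
    (measurableSet_cylinderEvents_of_dependsOn hB hBJ)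

lemma infinitePi_real_inter_of_disjoint (hA : MeasurableSet A) (hB : MeasurableSet B)
    (hAI : DependsOn (· ∈ A) I) (hBJ : DependsOn (· ∈ B) J) (hIJ : Disjoint I J) :
    (Measure.infinitePi μ).real (A ∩ B)
      = (Measure.infinitePi μ).real A * (Measure.infinitePi μ).real B := by
  simp only [measureReal_def, infinitePi_inter_of_disjoint hA hB hAI hBJ hIJ, ENNReal.toReal_mul]

lemma infinitePi_map_of_dependsOn_disjoint {α : Type*} {Y : α → Type*}
    [∀ a, MeasurableSpace (Y a)] {F : ∀ a, (∀ i, X i) → Y a} {J : α → Set ι}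
    (hF : ∀ a, Measurable (F a)) (hdep : ∀ a, DependsOn (F a) (J a))
    (hJ : Pairwise fun a b => Disjoint (J a) (J b)) :
    (Measure.infinitePi μ).map (fun ω a => F a ω)
      = Measure.infinitePi fun a => (Measure.infinitePi μ).map (F a) := by
  classical
  have hprob (a : α) : IsProbabilityMeasure ((Measure.infinitePi μ).map (F a)) :=
    Measure.isProbabilityMeasure_map (hF a).aemeasurable
  refine Measure.eq_infinitePi _ fun s t ht => ?_
  rw [Measure.map_apply (measurable_pi_lambda _ hF)
    (.pi s.countable_toSet fun a _ => ht a)]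
  induction s using Finset.induction_on with
  | empty => simp
  | insert a s ha ih =>
    have hinter : (fun ω a => F a ω) ⁻¹' Set.pi (insert a s : Finset α) t
        = F a ⁻¹' t a ∩ (fun ω a => F a ω) ⁻¹' Set.pi s t := by
      ext ω; simp
    have hpi : DependsOn (· ∈ (fun ω a => F a ω) ⁻¹' Set.pi s t) (⋃ b ∈ s, J b) :=
      dependsOn_mem_of_imp fun ω ω' h hω b hb => by
        have hb' : F b ω ∈ t b := hω b hb
        rwa [hdep b fun i hi => h i (mem_biUnion hb hi)] at hb'
    rw [hinter, infinitePi_inter_of_disjoint (hF a (ht a))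
      (measurable_pi_lambda _ hF (.pi s.countable_toSet fun a _ => ht a))
      (dependsOn_mem_of_imp fun ω ω' h hω => by rw [mem_preimage, ← hdep a h]; exact hω) hpi
      (disjoint_iUnion₂_right.2 fun b hb => hJ (ne_of_mem_of_not_mem hb ha).symm),
      ih, Finset.prod_insert ha, Measure.map_apply (hF a) (ht a)]

end DependsOn

section CoinProduct

variable {ι : Type*}

/-- The product Bernoulli measure with densities `P`, over an arbitrary index type. -/
noncomputable abbrev coinProduct (P : ι → ℝ) : Measure (ι → Bool) :=
  Measure.infinitePi fun i => coin (P i)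

lemma measurableSet_eval (e : ι) (b : Bool) : MeasurableSet {ω : ι → Bool | ω e = b} :=
  measurableSet_eq_fun (measurable_pi_apply e) measurable_const

lemma dependsOn_eval (e : ι) (b : Bool) : DependsOn (· ∈ {ω : ι → Bool | ω e = b}) {e} :=
  fun ω ω' h => by simp [h e rfl]

lemma coinProduct_real_eval (P : ι → ℝ) (e : ι) (b : Bool) :
    (coinProduct P).real {ω | ω e = b} = (coin (P e)).real {b} := by
  rw [← Measure.infinitePi_map_eval (fun i => coin (P i)) e,
    map_measureReal_apply (measurable_pi_apply e) .of_discrete]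
  rfl

lemma measurableSet_forall_eq (s : Finset ι) (b : Bool) :
    MeasurableSet {ω : ι → Bool | ∀ i ∈ s, ω i = b} := by
  simp only [ofPred_forall]
  exact .biInter s.countable_toSet fun i _ => measurableSet_eval i b

lemma dependsOn_forall_eq (s : Finset ι) (b : Bool) :
    DependsOn (· ∈ {ω : ι → Bool | ∀ i ∈ s, ω i = b}) s :=
  dependsOn_mem_of_imp fun _ _ h hω i hi => h i hi ▸ hω i hi

lemma coinProduct_real_forall_eq (P : ι → ℝ) (s : Finset ι) (b : Bool) :
    (coinProduct P).real {ω | ∀ i ∈ s, ω i = b} = ∏ i ∈ s, (coin (P i)).real {b} := by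
  have hpi : {ω : ι → Bool | ∀ i ∈ s, ω i = b} = Set.pi s fun _ => {b} := by ext; simp
  rw [hpi, measureReal_def, Measure.infinitePi_pi _ fun _ _ => .singleton b, ENNReal.toReal_prod]
  rfl

lemma compl_forall_eq_false (s : Finset ι) :
    {ω : ι → Bool | ∀ i ∈ s, ω i = false}ᶜ = {ω | ∃ i ∈ s, ω i = true} := by
  ext; simp

lemma measurableSet_exists_eq_true (s : Finset ι) :
    MeasurableSet {ω : ι → Bool | ∃ i ∈ s, ω i = true} :=
  compl_forall_eq_false s ▸ (measurableSet_forall_eq s false).compl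

lemma dependsOn_exists_eq_true (s : Finset ι) :
    DependsOn (· ∈ {ω : ι → Bool | ∃ i ∈ s, ω i = true}) s :=
  dependsOn_mem_of_imp fun _ _ h ⟨i, hi, hω⟩ => ⟨i, hi, h i hi ▸ hω⟩

lemma coinProduct_real_exists_eq_true (P : ι → ℝ) (s : Finset ι) :
    (coinProduct P).real {ω | ∃ i ∈ s, ω i = true}
      = 1 - ∏ i ∈ s, (1 - (coin (P i)).real {true}) := by
  rw [← compl_forall_eq_false, probReal_compl_eq_one_sub (measurableSet_forall_eq s false),
    coinProduct_real_forall_eq]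
  simp only [real_false_eq_one_sub]

lemma measurable_decide_mem {Ω α : Type*} [MeasurableSpace Ω] {A : α → Set Ω}
    [∀ a, DecidablePred (· ∈ A a)] (hA : ∀ a, MeasurableSet (A a)) :
    Measurable fun ω a => decide (ω ∈ A a) := by
  refine measurable_pi_lambda _ fun a => measurable_to_bool ?_
  simpa [preimage] using hA a

lemma coinProduct_map_decide_mem {α : Type*} {P : ι → ℝ} {Q : α → ℝ} {A : α → Set (ι → Bool)}
    {J : α → Set ι} [∀ a, DecidablePred (· ∈ A a)] (hA : ∀ a, MeasurableSet (A a))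
    (hdep : ∀ a, DependsOn (· ∈ A a) (J a)) (hJ : Pairwise fun a b => Disjoint (J a) (J b))
    (hlaw : ∀ a, (coinProduct P).real (A a) = Q a) :
    (coinProduct P).map (fun ω a => decide (ω ∈ A a)) = coinProduct Q := by
  have hF (a : α) : Measurable fun ω => decide (ω ∈ A a) :=
    (measurable_pi_apply a).comp (measurable_decide_mem hA)
  rw [infinitePi_map_of_dependsOn_disjoint hF
    (fun a ω ω' h => decide_eq_decide.2 (hdep a h).to_iff) hJ]
  congr 1 with a : 1
  have := Measure.isProbabilityMeasure_map (μ := coinProduct P) (hF a).aemeasurable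
  have hQ : Q a ∈ Icc (0 : ℝ) 1 := hlaw a ▸ ⟨measureReal_nonneg, measureReal_le_one⟩
  refine measure_bool_ext ?_
  rw [map_measureReal_apply (hF a) .of_discrete, coin_real_true hQ, ← hlaw a]
  congr 1 with ω
  simp

lemma coinProduct_real_mono_of_isUpperSet {A : Set (ι → Bool)} (hA : MeasurableSet A)
    (hup : IsUpperSet A) {P Q : ι → ℝ} (hPQ : P ≤ Q) :
    (coinProduct P).real A ≤ (coinProduct Q).real A := by
  rw [coinProduct, coinProduct, ← infinitePi_unitUniform_map_threshold P,
    ← infinitePi_unitUniform_map_threshold Q, map_measureReal_apply (measurable_threshold P) hA,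
    map_measureReal_apply (measurable_threshold Q) hA]
  refine measureReal_mono fun u hu => hup (fun i => ?_) hu
  have : u i < P i → u i < Q i := fun h => h.trans_le (hPQ i)
  by_cases h : u i < P i <;> simp [threshold, h, this]

/-- The homogeneous product Bernoulli measure. -/
noncomputable abbrev perc (ι : Type*) (p : ℝ) : Measure (ι → Bool) := coinProduct fun _ => p

lemma hasDerivAt_of_dependsOn_empty {A : Set (ι → Bool)} (hA : DependsOn (· ∈ A) ∅) (p : ℝ) :
    HasDerivAt (fun p => (perc ι p).real A) 0 p := by
  obtain rfl | ⟨ω, hω⟩ := A.eq_empty_or_nonempty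
  · simpa using hasDerivAt_const p (0 : ℝ)
  · have huniv : A = univ := eq_univ_of_forall fun ω' => mem_of_dependsOn hA (by simp) hω
    simpa [huniv] using hasDerivAt_const p (1 : ℝ)

end CoinProduct

section Russo

variable {ι : Type*} [DecidableEq ι]

/-- The event that `A` holds once the state of `e` has been changed to `b`. -/
def forced (e : ι) (b : Bool) (A : Set (ι → Bool)) : Set (ι → Bool) :=
  (fun ω => Function.update ω e b) ⁻¹' A

/-- The event that `e` is pivotal for the increasing event `A`: `A` occurs if and only if `e` is
open. -/
def pivotal (e : ι) (A : Set (ι → Bool)) : Set (ι → Bool) := forced e true A \ forced e false A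

variable {A : Set (ι → Bool)}

lemma measurableSet_forced (hA : MeasurableSet A) (e : ι) (b : Bool) :
    MeasurableSet (forced e b A) :=
  (measurable_pi_lambda _ fun i => by
    obtain rfl | hi := eq_or_ne i e
    · simp only [Function.update_self, measurable_const]
    · simpa only [Function.update_of_ne hi] using measurable_pi_apply i) hA

lemma measurableSet_pivotal (hA : MeasurableSet A) (e : ι) : MeasurableSet (pivotal e A) :=
  (measurableSet_forced hA e true).diff (measurableSet_forced hA e false)

lemma dependsOn_forced {I : Set ι} (hA : DependsOn (· ∈ A) I) (e : ι) (b : Bool) :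
    DependsOn (· ∈ forced e b A) (I \ {e}) := fun ω ω' h => hA fun i hi => by
  obtain rfl | hie := eq_or_ne i e
  · simp
  · simpa [Function.update_of_ne hie] using h i ⟨hi, hie⟩

lemma isUpperSet_forced (hA : IsUpperSet A) (e : ι) (b : Bool) : IsUpperSet (forced e b A) :=
  fun _ _ h => hA (update_le_update_iff.2 ⟨le_rfl, fun i _ => h i⟩)

lemma forced_false_subset_forced_true (hA : IsUpperSet A) (e : ι) :
    forced e false A ⊆ forced e true A :=
  fun _ => hA (update_le_update_iff.2 ⟨Bool.false_le _, fun _ _ => le_rfl⟩)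

lemma forced_pivotal {e f : ι} (h : f ≠ e) (b : Bool) :
    forced e b (pivotal f A) = pivotal f (forced e b A) := by
  ext ω
  simp only [pivotal, forced, mem_sdiff, mem_preimage, Function.update_comm h]

lemma coinProduct_real_inter_eval (P : ι → ℝ) (hA : MeasurableSet A) (e : ι) (b : Bool) :
    (coinProduct P).real (A ∩ {ω | ω e = b})
      = (coin (P e)).real {b} * (coinProduct P).real (forced e b A) := by
  have hinter : A ∩ {ω | ω e = b} = {ω | ω e = b} ∩ forced e b A := by
    ext ω
    rw [inter_comm, mem_inter_iff, mem_inter_iff]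
    refine and_congr_right fun h => ?_
    rw [forced, mem_preimage, ← (h : ω e = b), Function.update_eq_self]
  rw [hinter, infinitePi_real_inter_of_disjoint (measurableSet_eval e b)
    (measurableSet_forced hA e b) (dependsOn_eval e b) (dependsOn_forced (dependsOn_univ _) e b)
    disjoint_sdiff_right, coinProduct_real_eval]

lemma coinProduct_real_eq_forced (P : ι → ℝ) (hA : MeasurableSet A) {e : ι}
    (he : P e ∈ Icc (0 : ℝ) 1) :
    (coinProduct P).real A = P e * (coinProduct P).real (forced e true A)
      + (1 - P e) * (coinProduct P).real (forced e false A) := by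
  have hdiff : A \ {ω | ω e = true} = A ∩ {ω | ω e = false} := by ext; simp
  rw [← measureReal_inter_add_sdiff (s := A) (measurableSet_eval e true), hdiff,
    coinProduct_real_inter_eval P hA, coinProduct_real_inter_eval P hA, coin_real_true he,
    coin_real_false he]

lemma coinProduct_real_pivotal (P : ι → ℝ) (hA : MeasurableSet A) (hup : IsUpperSet A) (e : ι) :
    (coinProduct P).real (pivotal e A)
      = (coinProduct P).real (forced e true A) - (coinProduct P).real (forced e false A) :=
  measureReal_sdiff (forced_false_subset_forced_true hup e) (measurableSet_forced hA e false)

theorem hasDerivAt_perc_real (F : Finset ι) (hA : MeasurableSet A) (hup : IsUpperSet A)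
    (hdep : DependsOn (· ∈ A) (F : Set ι)) {p : ℝ} (hp : p ∈ Ioo (0 : ℝ) 1) :
    HasDerivAt (fun p => (perc ι p).real A) (∑ e ∈ F, (perc ι p).real (pivotal e A)) p := by
  induction F using Finset.induction_on generalizing A with
  | empty => simpa using hasDerivAt_of_dependsOn_empty (by simpa using hdep) p
  | insert e F he ih =>
    have hforced (b : Bool) : HasDerivAt (fun p => (perc ι p).real (forced e b A))
        (∑ f ∈ F, (perc ι p).real (pivotal f (forced e b A))) p :=
      ih (measurableSet_forced hA e b) (isUpperSet_forced hup e b)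
        ((dependsOn_forced hdep e b).mono (by simp))
    have hsplit : (fun p => (perc ι p).real A) =ᶠ[nhds p] fun p =>
        p * (perc ι p).real (forced e true A) + (1 - p) * (perc ι p).real (forced e false A) := by
      filter_upwards [Ioo_mem_nhds hp.1 hp.2] with r hr
      exact coinProduct_real_eq_forced _ hA (Ioo_subset_Icc_self hr)
    have hpivotal (f : ι) (hf : f ∈ F) : (perc ι p).real (pivotal f A)
        = p * (perc ι p).real (pivotal f (forced e true A))
          + (1 - p) * (perc ι p).real (pivotal f (forced e false A)) := by
      have hne : f ≠ e := fun h => he (h ▸ hf)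
      rw [coinProduct_real_eq_forced _ (measurableSet_pivotal hA f) (e := e)
        (Ioo_subset_Icc_self hp), forced_pivotal hne, forced_pivotal hne]
    have hderiv := ((hasDerivAt_id p).mul (hforced true)).add
      (((hasDerivAt_id p).const_sub 1).mul (hforced false))
    refine (hderiv.congr_of_eventuallyEq hsplit).congr_deriv ?_
    rw [Finset.sum_insert he, coinProduct_real_pivotal _ hA hup, Finset.sum_congr rfl hpivotal,
      Finset.sum_add_distrib, ← Finset.mul_sum, ← Finset.mul_sum]
    simp only [id]
    ring

end Russo

/-! ### Percolation on a labelled graph -/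

lemma one_sub_le_mul_exp_of_mul_one_sub_le_deriv {f f' : ℝ → ℝ} {a b c : ℝ} (hab : a ≤ b)
    (hf : ∀ s ∈ Icc a b, HasDerivAt f (f' s) s) (hle : ∀ s ∈ Icc a b, c * (1 - f s) ≤ f' s) :
    1 - f b ≤ (1 - f a) * Real.exp (-(c * (b - a))) := by
  have hg (s : ℝ) (hs : s ∈ Icc a b) : HasDerivAt (fun s => (1 - f s) * Real.exp (c * s))
      ((c * (1 - f s) - f' s) * Real.exp (c * s)) s := by
    have hexp := ((hasDerivAt_id s).const_mul c).exp
    exact (((hf s hs).const_sub 1).mul hexp).congr_deriv (by simp only [id]; ring)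
  have hanti : AntitoneOn (fun s => (1 - f s) * Real.exp (c * s)) (Icc a b) :=
    antitoneOn_of_hasDerivWithinAt_nonpos (convex_Icc a b)
      (fun s hs => (hg s hs).continuousAt.continuousWithinAt)
      (fun s hs => (hg s (interior_subset hs)).hasDerivWithinAt)
      fun s hs => mul_nonpos_of_nonpos_of_nonneg
        (sub_nonpos.2 (hle s (interior_subset hs))) (Real.exp_nonneg _)
  have hle := hanti (left_mem_Icc.2 hab) (right_mem_Icc.2 hab) hab
  calc 1 - f b = (1 - f b) * Real.exp (c * b) * Real.exp (-(c * b)) := by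
        rw [mul_assoc, ← Real.exp_add, add_neg_cancel, Real.exp_zero, mul_one]
    _ ≤ (1 - f a) * Real.exp (c * a) * Real.exp (-(c * b)) := by gcongr
    _ = (1 - f a) * Real.exp (-(c * (b - a))) := by
        rw [mul_assoc, ← Real.exp_add]
        ring_nf

lemma measurableSet_reflTransGen {Ω V : Type*} [MeasurableSpace Ω] [Countable V]
    {R : Ω → V → V → Prop} (hR : ∀ x y, MeasurableSet {ω | R ω x y}) (x y : V) :
    MeasurableSet {ω | Relation.ReflTransGen (R ω) x y} := by
  have hchain (l : List V) (x : V) : MeasurableSet {ω | List.IsChain (R ω) (x :: l)} := by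
    induction l generalizing x with
    | nil => simp
    | cons z l ih =>
      simp only [List.isChain_cons_cons]
      exact (hR x z).inter (ih z)
  have hiUnion : {ω | Relation.ReflTransGen (R ω) x y}
      = ⋃ l : List V, {ω | List.IsChain (R ω) (x :: l) ∧ (x :: l).getLast (by simp) = y} := by
    ext ω
    simp only [mem_ofPred_eq, mem_iUnion]
    exact ⟨List.exists_isChain_cons_of_relationReflTransGen, fun ⟨l, hl, hy⟩ =>
      List.relationReflTransGen_of_exists_isChain_cons l hl hy⟩
  exact hiUnion ▸ .iUnion fun l => (hchain l x).inter (.const _)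

lemma reachable_iff_of_adj_iff {V : Type*} {H H' : SimpleGraph V} {x b : V}
    (h : ∀ y z, H.Reachable z b → (H.Adj y z ↔ H'.Adj y z)) :
    H.Reachable x b ↔ H'.Reachable x b := by
  constructor <;> intro hxb
  · rw [SimpleGraph.reachable_iff_reflTransGen] at hxb
    induction hxb using Relation.ReflTransGen.head_induction_on with
    | refl => exact .rfl
    | head hyz hzb ih =>
      rw [← SimpleGraph.reachable_iff_reflTransGen] at hzb
      exact ((h _ _ hzb).1 hyz).reachable.trans ih
  · rw [SimpleGraph.reachable_iff_reflTransGen] at hxb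
    induction hxb using Relation.ReflTransGen.head_induction_on with
    | refl => exact .rfl
    | head hyz _ ih => exact ((h _ _ ih).2 hyz).reachable.trans ih

/-- A graph on `V` whose edges carry distinct labels in `E`. Percolation configurations are
functions of the label, so that `E` can be chosen to make the symmetries of the graph explicit (for
the square lattice, an edge is labelled by twice its midpoint). Labels which are not taken by an
edge are harmless. -/
structure LabelledGraph (V E : Type*) extends SimpleGraph V where
  /-- The label of an edge. -/
  label : Sym2 V → E
  label_injOn : InjOn label toSimpleGraph.edgeSet

namespace LabelledGraph

variable {V E : Type*} (G : LabelledGraph V E)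

/-- The label of the edge joining `x` and `y`. -/
def bond (x y : V) : E := G.label s(x, y)

/-- The labels of the edges with both endpoints in `D`. -/
def bondsIn (D : Set V) : Set E := {e | ∃ x ∈ D, ∃ y ∈ D, G.Adj x y ∧ G.bond x y = e}

/-- The graph of the open edges of `ω` with both endpoints in `D`. -/
def openGraph (ω : E → Bool) (D : Set V) : SimpleGraph V where
  Adj x y := G.Adj x y ∧ x ∈ D ∧ y ∈ D ∧ ω (G.bond x y) = true
  symm := ⟨fun x y ⟨h, hx, hy, ho⟩ => ⟨h.symm, hy, hx, by rwa [bond, Sym2.eq_swap]⟩⟩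
  loopless := ⟨fun x h => G.loopless.irrefl x h.1⟩

/-- The event that `x` and `y` are joined by an open path inside `D`. -/
def conn (D : Set V) (x y : V) : Set (E → Bool) := {ω | (G.openGraph ω D).Reachable x y}

/-- The event that `x` is joined to the set `B` by an open path inside `D`. -/
def connTo (D B : Set V) (x : V) : Set (E → Bool) := {ω | ∃ b ∈ B, ω ∈ G.conn D x b}

/-- The open cluster of `x`. -/
def openCluster (ω : E → Bool) (x : V) : Set V := {y | ω ∈ G.conn univ x y}

variable {G} {ω ω' : E → Bool} {D D' B C : Set V} {x y z a b : V}

lemma bond_eq_bond_iff (hxy : G.Adj x y) (hab : G.Adj a b) :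
    G.bond x y = G.bond a b ↔ x = a ∧ y = b ∨ x = b ∧ y = a := by
  rw [bond, bond, G.label_injOn.eq_iff hxy hab, Sym2.eq_iff]

lemma bond_mem_bondsIn_iff (hxy : G.Adj x y) : G.bond x y ∈ G.bondsIn D ↔ x ∈ D ∧ y ∈ D := by
  refine ⟨?_, fun ⟨hx, hy⟩ => ⟨x, hx, y, hy, hxy, rfl⟩⟩
  rintro ⟨a, ha, b, hb, hab, he⟩
  obtain ⟨rfl, rfl⟩ | ⟨rfl, rfl⟩ := (bond_eq_bond_iff hab hxy).1 he <;> exact ⟨‹_›, ‹_›⟩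

lemma bondsIn_mono (h : D ⊆ D') : G.bondsIn D ⊆ G.bondsIn D' :=
  fun _ ⟨x, hx, y, hy, hxy⟩ => ⟨x, h hx, y, h hy, hxy⟩

lemma openGraph_mono (hD : D ⊆ D') (hω : ω ≤ ω') : G.openGraph ω D ≤ G.openGraph ω' D' :=
  fun _ _ ⟨h, hx, hy, ho⟩ => ⟨h, hD hx, hD hy, hω _ ho⟩

lemma openGraph_congr (h : ∀ e ∈ G.bondsIn D, ω e = ω' e) :
    G.openGraph ω D = G.openGraph ω' D := by
  ext x y
  refine and_congr_right fun hxy => and_congr_right fun hx => and_congr_right fun hy => ?_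
  rw [h _ ⟨x, hx, y, hy, hxy, rfl⟩]

lemma conn_mono (h : D ⊆ D') : G.conn D x y ⊆ G.conn D' x y :=
  fun _ hω => hω.mono (openGraph_mono h le_rfl)

lemma connTo_mono (h : D ⊆ D') : G.connTo D B x ⊆ G.connTo D' B x :=
  fun _ ⟨b, hb, hω⟩ => ⟨b, hb, conn_mono h hω⟩

lemma isUpperSet_conn : IsUpperSet (G.conn D x y) :=
  fun _ _ h hω => hω.mono (openGraph_mono le_rfl h)

lemma isUpperSet_connTo : IsUpperSet (G.connTo D B x) :=
  fun _ _ h ⟨b, hb, hω⟩ => ⟨b, hb, isUpperSet_conn h hω⟩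

lemma dependsOn_conn : DependsOn (· ∈ G.conn D x y) (G.bondsIn D) := fun ω ω' h => by
  simp only [conn, mem_ofPred_eq, openGraph_congr h]

lemma dependsOn_connTo : DependsOn (· ∈ G.connTo D B x) (G.bondsIn D) := fun ω ω' h => by
  simp only [connTo, conn, mem_ofPred_eq, openGraph_congr h]

lemma mem_connTo_of_reachable (h : (G.openGraph ω D).Reachable x y) (hy : ω ∈ G.connTo D B y) :
    ω ∈ G.connTo D B x :=
  let ⟨b, hb, hyb⟩ := hy
  ⟨b, hb, h.trans hyb⟩

lemma mem_biUnion_openCluster_iff_of_adj {S : Set V} (hxy : (G.openGraph ω univ).Adj x y) :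
    x ∈ ⋃ s ∈ S, G.openCluster ω s ↔ y ∈ ⋃ s ∈ S, G.openCluster ω s := by
  simp only [mem_iUnion₂]
  exact exists₂_congr fun s _ =>
    ⟨fun h => h.trans hxy.reachable, fun h => h.trans hxy.symm.reachable⟩

lemma mem_pivotal_connTo [DecidableEq E] (hxy : G.Adj x y) (hx : x ∈ D) (hy : y ∈ D)
    (hzx : ω ∈ G.conn D z x) (hyB : ω ∈ G.connTo D B y) (hzB : ω ∉ G.connTo D B z) :
    ω ∈ pivotal (G.bond x y) (G.connTo D B z) := by
  have hle : ω ≤ Function.update ω (G.bond x y) true :=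
    le_update_iff.2 ⟨Bool.le_true _, fun _ _ => le_rfl⟩
  have hge : Function.update ω (G.bond x y) false ≤ ω :=
    update_le_iff.2 ⟨Bool.false_le _, fun _ _ => le_rfl⟩
  refine ⟨mem_connTo_of_reachable ((isUpperSet_conn hle hzx).trans ?_)
    (isUpperSet_connTo hle hyB), fun h => hzB (isUpperSet_connTo hge h)⟩
  exact SimpleGraph.Adj.reachable ⟨hxy, hx, hy, by simp⟩

lemma exists_last_exit (h : ω ∈ G.conn univ x y) (hx : x ∈ C) (hy : y ∉ C) :
    ∃ a ∈ C, ∃ b ∉ C, (G.openGraph ω univ).Adj a b ∧ ω ∈ G.conn Cᶜ b y := by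
  by_contra! hno
  suffices h' : x ∉ C ∧ ω ∈ G.conn Cᶜ x y from h'.1 hx
  clear hx
  simp only [conn, mem_ofPred_eq, SimpleGraph.reachable_iff_reflTransGen] at h hno ⊢
  induction h using Relation.ReflTransGen.head_induction_on with
  | refl => exact ⟨hy, .refl⟩
  | @head a b hab _ ih =>
    have ha : a ∉ C := fun ha => hno a ha b ih.1 hab ih.2
    exact ⟨ha, .head ⟨hab.1, ha, ih.1, hab.2.2.2⟩ ih.2⟩

open Classical in
/-- The set of vertices of `D` which are joined to `B` by an open path inside `D`. -/
noncomputable def clusterIn (G : LabelledGraph V E) (ω : E → Bool) (D : Finset V) (B : Set V) :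
    Finset V := {x ∈ D | ω ∈ G.connTo D B x}

lemma mem_clusterIn {D : Finset V} :
    x ∈ G.clusterIn ω D B ↔ x ∈ D ∧ ω ∈ G.connTo D B x := by
  simp [clusterIn]

lemma mem_clusterIn_singleton {D : Finset V} :
    y ∈ G.clusterIn ω D {x} ↔ y ∈ D ∧ ω ∈ G.conn D x y := by
  simp [mem_clusterIn, connTo, conn, SimpleGraph.reachable_comm]

lemma clusterIn_subset (G : LabelledGraph V E) (ω : E → Bool) (D : Finset V) (B : Set V) :
    G.clusterIn ω D B ⊆ D :=
  fun _ hx => (mem_clusterIn.1 hx).1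

-- Exploring the cluster from `B` only reveals the bonds which touch it.
lemma dependsOn_clusterIn_eq (G : LabelledGraph V E) (D C : Finset V) (B : Set V) :
    DependsOn (· ∈ {ω | G.clusterIn ω D B = C}) (G.bondsIn D \ G.bondsIn (C : Set V)ᶜ) := by
  refine dependsOn_mem_of_imp ?_
  rintro ω ω' h rfl
  have hadj {x y : V} (hy : ω ∈ G.connTo D B y) :
      (G.openGraph ω D).Adj x y ↔ (G.openGraph ω' D).Adj x y := by
    refine and_congr_right fun hxy => and_congr_right fun hx => and_congr_right fun hyD => ?_
    rw [h _ ⟨(bond_mem_bondsIn_iff hxy).2 ⟨hx, hyD⟩, fun hC =>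
      ((bond_mem_bondsIn_iff hxy).1 hC).2 (mem_clusterIn.2 ⟨hyD, hy⟩)⟩]
  have hconn {x b : V} (hb : b ∈ B) : ω ∈ G.conn D x b ↔ ω' ∈ G.conn D x b :=
    reachable_iff_of_adj_iff fun _ _ hyb => hadj ⟨b, hb, hyb⟩
  ext x
  simp only [mem_clusterIn, connTo, mem_ofPred_eq]
  exact and_congr_right fun _ => exists_congr fun b => and_congr_right fun hb => (hconn hb).symm

section Boundary

variable [G.LocallyFinite]

open Classical in
/-- The pairs `(x, y)` such that `x ∈ S`, `y ∉ S` and `x`, `y` are joined by an edge. -/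
noncomputable def boundary (G : LabelledGraph V E) [G.LocallyFinite] (S : Finset V) :
    Finset (V × V) := S.biUnion fun x => (G.neighborFinset x \ S).map (.sectR x V)

open Classical in
/-- The labels of the edges with at least one endpoint in `D`. -/
noncomputable def bondsMeeting (G : LabelledGraph V E) [G.LocallyFinite] (D : Finset V) :
    Finset E := D.biUnion fun x => (G.neighborFinset x).image (G.bond x)

lemma bond_mem_bondsMeeting {D : Finset V} (hx : x ∈ D) (hxy : G.Adj x y) :
    G.bond x y ∈ G.bondsMeeting D := by
  classical
  exact Finset.mem_biUnion.2
    ⟨x, hx, Finset.mem_image_of_mem _ ((G.mem_neighborFinset x y).2 hxy)⟩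

lemma bondsIn_subset_bondsMeeting (D : Finset V) : G.bondsIn D ⊆ G.bondsMeeting D := by
  rintro _ ⟨x, hx, y, -, hxy, rfl⟩
  exact bond_mem_bondsMeeting hx hxy

lemma mem_boundary {S : Finset V} {z : V × V} :
    z ∈ G.boundary S ↔ z.1 ∈ S ∧ z.2 ∉ S ∧ G.Adj z.1 z.2 := by
  obtain ⟨x, y⟩ := z
  simp only [boundary, Finset.mem_biUnion, Finset.mem_map, Finset.mem_sdiff,
    SimpleGraph.mem_neighborFinset, Function.Embedding.sectR_apply, Prod.mk.injEq]
  grind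

lemma injOn_bond_boundary {S : Finset V} :
    InjOn (fun z : V × V => G.bond z.1 z.2) (G.boundary S : Set (V × V)) := by
  intro z hz z' hz' h
  obtain ⟨hzS, -, hadj⟩ := mem_boundary.1 hz
  obtain ⟨-, hzS', hadj'⟩ := mem_boundary.1 hz'
  obtain ⟨h₁, h₂⟩ | ⟨h₁, -⟩ := (bond_eq_bond_iff hadj hadj').1 h
  · exact Prod.ext h₁ h₂
  · exact absurd (h₁ ▸ hzS) hzS'

lemma connTo_inter_clusterIn_eq_subset {S C : Finset V} {o : V} (ho : o ∈ S)
    (hB : Disjoint (S : Set V) B) :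
    {ω | G.clusterIn ω S {o} = C} ∩ G.connTo univ B o
      ⊆ ⋃ z ∈ G.boundary S, {ω | ω (G.bond z.1 z.2) = true} ∩
        (({ω | G.clusterIn ω S {o} = C} ∩ G.conn S o z.1) ∩ G.connTo (C : Set V)ᶜ B z.2) := by
  rintro ω ⟨rfl, b, hb, hob⟩
  obtain ⟨x, hx, y, hy, hxy, hyb⟩ := exists_last_exit (C := (G.clusterIn ω S {o} : Set V)) hob
    (mem_clusterIn_singleton.2 ⟨ho, .rfl⟩)
    fun h => hB.notMem_of_mem_left (clusterIn_subset _ _ _ _ h) hb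
  obtain ⟨hxS, hox⟩ := mem_clusterIn_singleton.1 hx
  have hyS : y ∉ S := fun hyS => hy <| mem_clusterIn_singleton.2
    ⟨hyS, hox.trans (SimpleGraph.Adj.reachable ⟨hxy.1, hxS, hyS, hxy.2.2.2⟩)⟩
  exact mem_biUnion (x := (x, y)) (mem_boundary.2 ⟨hxS, hyS, hxy.1⟩)
    ⟨hxy.2.2.2, ⟨rfl, hox⟩, b, hb, hyb⟩

lemma conn_sdiff_inter_clusterIn_eq_subset_pivotal [DecidableEq V] [DecidableEq E] {D C : Finset V}
    {o : V} {z : V × V} (ho : o ∈ D) (hB : ∀ x ∈ D, x ∉ B → ∀ y, G.Adj x y → y ∈ D) (hoC : o ∉ C)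
    (hz : z ∈ G.boundary (D \ C)) :
    G.conn (D \ C : Finset V) o z.1 ∩ {ω | G.clusterIn ω D B = C}
      ⊆ {ω | G.clusterIn ω D B = C} ∩ pivotal (G.bond z.1 z.2) (G.connTo D B o) := by
  rintro ω ⟨hconn, rfl⟩
  obtain ⟨hz₁, hz₂, hadj⟩ := mem_boundary.1 hz
  obtain ⟨hz₁D, hz₁C⟩ := Finset.mem_sdiff.1 hz₁
  have hz₂D : z.2 ∈ D :=
    hB z.1 hz₁D (fun h => hz₁C (mem_clusterIn.2 ⟨hz₁D, _, h, .rfl⟩)) _ hadj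
  have hz₂C : z.2 ∈ G.clusterIn ω D B := by
    by_contra h
    exact hz₂ (Finset.mem_sdiff.2 ⟨hz₂D, h⟩)
  exact ⟨rfl, mem_pivotal_connTo hadj hz₁D hz₂D
    (conn_mono (Finset.coe_subset.2 Finset.sdiff_subset) hconn) (mem_clusterIn.1 hz₂C).2
    fun h => hoC (mem_clusterIn.2 ⟨ho, h⟩)⟩

end Boundary

variable [Countable V]

lemma measurableSet_conn : MeasurableSet (G.conn D x y) := by
  simp only [conn, SimpleGraph.reachable_iff_reflTransGen]
  exact measurableSet_reflTransGen (fun x y => (MeasurableSet.const _).inter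
    ((MeasurableSet.const _).inter ((MeasurableSet.const _).inter (measurableSet_eval _ true)))) x y

lemma measurableSet_connTo : MeasurableSet (G.connTo D B x) := by
  have hiUnion : G.connTo D B x = ⋃ b ∈ B, G.conn D x b := by ext; simp [connTo]
  exact hiUnion ▸ .biUnion B.to_countable fun _ _ => measurableSet_conn

lemma measurableSet_clusterIn_eq (G : LabelledGraph V E) (D C : Finset V) (B : Set V) :
    MeasurableSet {ω | G.clusterIn ω D B = C} := by
  simp only [Finset.ext_iff, mem_clusterIn, ofPred_forall]
  refine .iInter fun x => ?_
  exact ((MeasurableSet.const _).inter measurableSet_connTo).iff (.const _)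

lemma sum_measureReal_inter_clusterIn_eq (G : LabelledGraph V E) (D : Finset V) (B : Set V)
    (μ : Measure (E → Bool)) [IsFiniteMeasure μ] (A : Set (E → Bool)) :
    ∑ C ∈ D.powerset, μ.real ({ω | G.clusterIn ω D B = C} ∩ A) = μ.real A := by
  have hpre (C : Finset V) : MeasurableSet ((G.clusterIn · D B) ⁻¹' {C}) :=
    measurableSet_clusterIn_eq G D C B
  have hsum := sum_measureReal_preimage_singleton (μ := μ.restrict A) (f := (G.clusterIn · D B))
    D.powerset fun C _ => hpre C
  have huniv : (G.clusterIn · D B) ⁻¹' (D.powerset : Set (Finset V)) = univ :=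
    eq_univ_of_forall fun ω => Finset.mem_coe.2 (Finset.mem_powerset.2 (clusterIn_subset G ω D B))
  rw [huniv] at hsum
  simp only [measureReal_restrict_apply (hpre _), measureReal_restrict_apply .univ,
    univ_inter] at hsum
  exact hsum

/-- The functional `φ_p(S)` of Duminil-Copin and Tassion: the expected number of open boundary
edges of `S` whose endpoint in `S` is joined to `o` inside `S`. -/
noncomputable def phi (G : LabelledGraph V E) [G.LocallyFinite] (p : ℝ) (S : Finset V) (o : V) :
    ℝ := p * ∑ z ∈ G.boundary S, (perc E p).real (G.conn S o z.1)

variable [G.LocallyFinite]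

section SimonLieb

variable {S C : Finset V} {o : V} {z : V × V} {p : ℝ}

lemma perc_real_clusterIn_eq_inter_connTo_le (hp : p ∈ Icc (0 : ℝ) 1) (hz : z ∈ G.boundary S) :
    (perc E p).real ({ω | ω (G.bond z.1 z.2) = true} ∩
        (({ω | G.clusterIn ω S {o} = C} ∩ G.conn S o z.1) ∩ G.connTo (C : Set V)ᶜ B z.2))
      ≤ p * (perc E p).real ({ω | G.clusterIn ω S {o} = C} ∩ G.conn S o z.1)
        * (perc E p).real (G.connTo univ B z.2) := by
  obtain ⟨hzS, hzS', hadj⟩ := mem_boundary.1 hz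
  by_cases hzC : z.1 ∈ C
  · have hinter : {ω | G.clusterIn ω S {o} = C} ∩ G.conn S o z.1 = {ω | G.clusterIn ω S {o} = C} :=
      inter_eq_left.2 fun ω hω => (mem_clusterIn_singleton.1 (hω ▸ hzC)).2
    have hcl := measurableSet_clusterIn_eq G S C {o}
    have hcldep := dependsOn_clusterIn_eq G S C {o}
    have hto : MeasurableSet (G.connTo (C : Set V)ᶜ B z.2) := measurableSet_connTo
    rw [hinter, infinitePi_real_inter_of_disjoint (measurableSet_eval _ _) (hcl.inter hto)
      (dependsOn_eval _ _) (dependsOn_inter hcldep dependsOn_connTo),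
      infinitePi_real_inter_of_disjoint hcl hto hcldep dependsOn_connTo disjoint_sdiff_left,
      coinProduct_real_eval, coin_real_true hp, ← mul_assoc]
    · exact mul_le_mul_of_nonneg_left (measureReal_mono (connTo_mono (subset_univ _)))
        (mul_nonneg hp.1 measureReal_nonneg)
    · rw [disjoint_singleton_left, mem_union, mem_sdiff, bond_mem_bondsIn_iff hadj,
        bond_mem_bondsIn_iff hadj]
      exact fun h => h.elim (fun h => hzS' h.1.2) fun h => h.1 hzC
  · have hempty : {ω | G.clusterIn ω S {o} = C} ∩ G.conn S o z.1 = ∅ :=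
      eq_empty_of_forall_notMem fun ω ⟨hω, hconn⟩ =>
        hzC (hω ▸ mem_clusterIn_singleton.2 ⟨hzS, hconn⟩)
    simp [hempty]

/-- The Simon–Lieb inequality. -/
theorem perc_real_connTo_le_sum_boundary (hp : p ∈ Icc (0 : ℝ) 1) (ho : o ∈ S)
    (hB : Disjoint (S : Set V) B) :
    (perc E p).real (G.connTo univ B o) ≤ ∑ z ∈ G.boundary S,
      p * (perc E p).real (G.conn S o z.1) * (perc E p).real (G.connTo univ B z.2) := by
  calc (perc E p).real (G.connTo univ B o)
      = ∑ C ∈ S.powerset,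
          (perc E p).real ({ω | G.clusterIn ω S {o} = C} ∩ G.connTo univ B o) :=
        (sum_measureReal_inter_clusterIn_eq G S {o} _ _).symm
    _ ≤ ∑ C ∈ S.powerset, ∑ z ∈ G.boundary S,
          p * (perc E p).real ({ω | G.clusterIn ω S {o} = C} ∩ G.conn S o z.1)
            * (perc E p).real (G.connTo univ B z.2) := Finset.sum_le_sum fun C _ =>
        (measureReal_mono (connTo_inter_clusterIn_eq_subset ho hB) (measure_ne_top _ _)).trans <|
          (measureReal_biUnion_finset_le _ _).trans <|
            Finset.sum_le_sum fun z hz => perc_real_clusterIn_eq_inter_connTo_le hp hz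
    _ = ∑ z ∈ G.boundary S,
          p * (perc E p).real (G.conn S o z.1) * (perc E p).real (G.connTo univ B z.2) := by
        rw [Finset.sum_comm]
        refine Finset.sum_congr rfl fun z _ => ?_
        rw [← Finset.sum_mul, ← Finset.mul_sum, sum_measureReal_inter_clusterIn_eq]

end SimonLieb

section DuminilCopinTassion

variable {D : Finset V} {o : V} {c p : ℝ}

lemma mul_perc_real_clusterIn_eq_le [DecidableEq V] [DecidableEq E] {C : Finset V} (ho : o ∈ D)
    (hB : ∀ x ∈ D, x ∉ B → ∀ y, G.Adj x y → y ∈ D) (hoC : o ∉ C)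
    (hc : c ≤ ∑ z ∈ G.boundary (D \ C), (perc E p).real (G.conn (D \ C : Finset V) o z.1)) :
    c * (perc E p).real {ω | G.clusterIn ω D B = C} ≤ ∑ e ∈ G.bondsMeeting D,
      (perc E p).real ({ω | G.clusterIn ω D B = C} ∩ pivotal e (G.connTo D B o)) := by
  set cl := {ω | G.clusterIn ω D B = C}
  have hindep (z : V × V) :
      (perc E p).real (G.conn (D \ C : Finset V) o z.1) * (perc E p).real cl
        = (perc E p).real (G.conn (D \ C : Finset V) o z.1 ∩ cl) := by
    refine (infinitePi_real_inter_of_disjoint measurableSet_conn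
      (measurableSet_clusterIn_eq G D C B) dependsOn_conn (dependsOn_clusterIn_eq G D C B)
      (disjoint_sdiff_right.mono_left (bondsIn_mono fun x hx => ?_))).symm
    exact (Finset.mem_sdiff.1 hx).2
  have himage : (G.boundary (D \ C)).image (fun z => G.bond z.1 z.2) ⊆ G.bondsMeeting D :=
    Finset.image_subset_iff.2 fun z hz => by
      obtain ⟨hz₁, -, hadj⟩ := mem_boundary.1 hz
      exact bond_mem_bondsMeeting (Finset.mem_sdiff.1 hz₁).1 hadj
  calc c * (perc E p).real cl
      ≤ (∑ z ∈ G.boundary (D \ C), (perc E p).real (G.conn (D \ C : Finset V) o z.1))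
          * (perc E p).real cl := mul_le_mul_of_nonneg_right hc measureReal_nonneg
    _ ≤ ∑ z ∈ G.boundary (D \ C),
          (perc E p).real (cl ∩ pivotal (G.bond z.1 z.2) (G.connTo D B o)) := by
        rw [Finset.sum_mul]
        exact Finset.sum_le_sum fun z hz => (hindep z).trans_le <|
          measureReal_mono (conn_sdiff_inter_clusterIn_eq_subset_pivotal ho hB hoC hz)
    _ = ∑ e ∈ (G.boundary (D \ C)).image fun z => G.bond z.1 z.2,
          (perc E p).real (cl ∩ pivotal e (G.connTo D B o)) :=
        (Finset.sum_image (f := fun e => (perc E p).real (cl ∩ pivotal e (G.connTo D B o)))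
          injOn_bond_boundary).symm
    _ ≤ _ := Finset.sum_le_sum_of_subset_of_nonneg himage fun _ _ _ => measureReal_nonneg

/-- The differential inequality of Duminil-Copin and Tassion. -/
theorem mul_one_sub_perc_real_connTo_le [DecidableEq E] (ho : o ∈ D)
    (hB : ∀ x ∈ D, x ∉ B → ∀ y, G.Adj x y → y ∈ D)
    (hc : ∀ S ⊆ D, o ∈ S → c ≤ ∑ z ∈ G.boundary S, (perc E p).real (G.conn S o z.1)) :
    c * (1 - (perc E p).real (G.connTo D B o))
      ≤ ∑ e ∈ G.bondsMeeting D, (perc E p).real (pivotal e (G.connTo D B o)) := by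
  classical
  rw [← probReal_compl_eq_one_sub measurableSet_connTo,
    ← sum_measureReal_inter_clusterIn_eq G D B _ (G.connTo D B o)ᶜ, Finset.mul_sum]
  calc ∑ C ∈ D.powerset, c * (perc E p).real ({ω | G.clusterIn ω D B = C} ∩ (G.connTo D B o)ᶜ)
      ≤ ∑ C ∈ D.powerset, ∑ e ∈ G.bondsMeeting D,
          (perc E p).real ({ω | G.clusterIn ω D B = C} ∩ pivotal e (G.connTo D B o)) := by
        refine Finset.sum_le_sum fun C _ => ?_
        by_cases hoC : o ∈ C
        · have hempty : {ω | G.clusterIn ω D B = C} ∩ (G.connTo D B o)ᶜ = ∅ :=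
            eq_empty_of_forall_notMem fun ω ⟨hω, ho⟩ => ho (mem_clusterIn.1 (hω ▸ hoC)).2
          simpa [hempty] using Finset.sum_nonneg fun _ _ => measureReal_nonneg
        · have hinter : {ω | G.clusterIn ω D B = C} ∩ (G.connTo D B o)ᶜ
              = {ω | G.clusterIn ω D B = C} :=
            inter_eq_left.2 fun ω hω h => hoC (hω ▸ mem_clusterIn.2 ⟨ho, h⟩)
          rw [hinter]
          exact mul_perc_real_clusterIn_eq_le ho hB hoC
            (hc _ Finset.sdiff_subset (Finset.mem_sdiff.2 ⟨ho, hoC⟩))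
    _ = ∑ e ∈ G.bondsMeeting D, (perc E p).real (pivotal e (G.connTo D B o)) := by
        rw [Finset.sum_comm]
        exact Finset.sum_congr rfl fun e _ => sum_measureReal_inter_clusterIn_eq G D B _ _

theorem one_sub_perc_real_connTo_le_exp {a b : ℝ} (ha : 0 < a) (hab : a ≤ b) (hb : b < 1)
    (ho : o ∈ D) (hB : ∀ x ∈ D, x ∉ B → ∀ y, G.Adj x y → y ∈ D)
    (hc : ∀ S ⊆ D, o ∈ S → c ≤ ∑ z ∈ G.boundary S, (perc E a).real (G.conn S o z.1)) :
    1 - (perc E b).real (G.connTo D B o) ≤ Real.exp (-(c * (b - a))) := by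
  classical
  have hderiv (s : ℝ) (hs : s ∈ Icc a b) : HasDerivAt (fun p => (perc E p).real (G.connTo D B o))
      (∑ e ∈ G.bondsMeeting D, (perc E s).real (pivotal e (G.connTo D B o))) s :=
    hasDerivAt_perc_real _ measurableSet_connTo isUpperSet_connTo
      (dependsOn_connTo.mono (bondsIn_subset_bondsMeeting D)) ⟨ha.trans_le hs.1, hs.2.trans_lt hb⟩
  have hle (s : ℝ) (hs : s ∈ Icc a b) : c * (1 - (perc E s).real (G.connTo D B o))
      ≤ ∑ e ∈ G.bondsMeeting D, (perc E s).real (pivotal e (G.connTo D B o)) :=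
    mul_one_sub_perc_real_connTo_le ho hB fun S hS hoS => (hc S hS hoS).trans <|
      Finset.sum_le_sum fun z _ => coinProduct_real_mono_of_isUpperSet measurableSet_conn
        isUpperSet_conn fun _ => hs.1
  refine (one_sub_le_mul_exp_of_mul_one_sub_le_deriv hab hderiv hle).trans ?_
  exact mul_le_of_le_one_left (Real.exp_nonneg _) (sub_le_self _ measureReal_nonneg)

end DuminilCopinTassion

end LabelledGraph

/-! ### The square lattice -/

/-- The square lattice `ℤ²`. The label `x + y` of the edge joining `x` and `y` is twice its
midpoint. -/
def squareLattice : LabelledGraph (ℤ × ℤ) (ℤ × ℤ) where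
  Adj x y := (y.1 - x.1).natAbs + (y.2 - x.2).natAbs = 1
  symm := ⟨fun x y h => by omega⟩
  loopless := ⟨fun x h => by omega⟩
  label := Sym2.lift ⟨(· + ·), add_comm⟩
  label_injOn := by
    rintro ⟨⟨x₁, x₂⟩, ⟨y₁, y₂⟩⟩ hxy ⟨⟨a₁, a₂⟩, ⟨b₁, b₂⟩⟩ hab h
    simp only [SimpleGraph.mem_edgeSet, Sym2.lift_mk, Prod.mk_add_mk, Prod.mk.injEq,
      Sym2.eq_iff] at hxy hab h ⊢
    omega

lemma squareLattice_adj {x y : ℤ × ℤ} :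
    squareLattice.Adj x y ↔ (y.1 - x.1).natAbs + (y.2 - x.2).natAbs = 1 := .rfl

lemma squareLattice_bond (x y : ℤ × ℤ) : squareLattice.bond x y = x + y := rfl

/-- The box of radius `n` around the origin. -/
noncomputable def box (n : ℕ) : Finset (ℤ × ℤ) := Finset.Icc (-n, -n) (n, n)

lemma mem_box {n : ℕ} {v : ℤ × ℤ} : v ∈ box n ↔ v.1.natAbs ≤ n ∧ v.2.natAbs ≤ n := by
  simp only [box, Finset.mem_Icc, Prod.le_def]
  omega

lemma exists_subset_box (S : Finset (ℤ × ℤ)) : ∃ n, S ⊆ box n := by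
  refine ⟨S.sup fun v => v.1.natAbs + v.2.natAbs, fun v hv => mem_box.2 ?_⟩
  have := Finset.le_sup (f := fun v : ℤ × ℤ => v.1.natAbs + v.2.natAbs) hv
  omega

lemma mem_box_succ_of_adj {n : ℕ} {x y : ℤ × ℤ} (hx : x ∈ box n) (hxy : squareLattice.Adj x y) :
    y ∈ box (n + 1) := by
  rw [squareLattice_adj] at hxy
  rw [mem_box] at hx ⊢
  omega

noncomputable instance : squareLattice.LocallyFinite := fun x => by
  refine Set.Finite.fintype <| (box (x.1.natAbs + x.2.natAbs + 1)).finite_toSet.subset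
    fun y hxy => mem_box_succ_of_adj (mem_box.2 ?_) hxy
  omega

/-- The configuration `ω` seen from `v`. -/
def shift (v : ℤ × ℤ) (ω : ℤ × ℤ → Bool) : ℤ × ℤ → Bool := fun e => ω (e + (v + v))

lemma measurable_shift (v : ℤ × ℤ) : Measurable (shift v) :=
  measurable_pi_lambda _ fun _ => measurable_pi_apply _

lemma perc_map_shift (p : ℝ) (v : ℤ × ℤ) : (perc (ℤ × ℤ) p).map (shift v) = perc (ℤ × ℤ) p :=
  Measure.map_infinitePi_infinitePi_of_inj (add_left_injective (v + v))

lemma shift_mem_conn {ω : ℤ × ℤ → Bool} {v x y : ℤ × ℤ}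
    (h : ω ∈ squareLattice.conn univ x y) :
    shift v ω ∈ squareLattice.conn univ (x - v) (y - v) := by
  have hadj {a b : ℤ × ℤ} (hab : (squareLattice.openGraph ω univ).Adj a b) :
      (squareLattice.openGraph (shift v ω) univ).Adj (a - v) (b - v) := by
    have hsum : a - v + (b - v) + (v + v) = a + b := by abel
    refine ⟨by simpa [squareLattice_adj] using hab.1, mem_univ _, mem_univ _, ?_⟩
    simpa only [shift, squareLattice_bond, hsum] using hab.2.2.2
  exact SimpleGraph.Reachable.map ⟨(· - v), hadj⟩ h

/-- The probability that the cluster of the origin leaves the box of radius `n`. -/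
noncomputable def arm (p : ℝ) (n : ℕ) : ℝ :=
  (perc (ℤ × ℤ) p).real (squareLattice.connTo univ (box n : Set (ℤ × ℤ))ᶜ 0)

lemma perc_real_connTo_le_arm (p : ℝ) {n : ℕ} {v : ℤ × ℤ} {B : Set (ℤ × ℤ)}
    (hB : ∀ b ∈ B, b - v ∉ box n) :
    (perc (ℤ × ℤ) p).real (squareLattice.connTo univ B v) ≤ arm p n := by
  conv_rhs => rw [arm, ← perc_map_shift p v,
    map_measureReal_apply (measurable_shift v) LabelledGraph.measurableSet_connTo]
  refine measureReal_mono fun ω ⟨b, hb, hω⟩ => ⟨b - v, hB b hb, ?_⟩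
  simpa using shift_mem_conn (v := v) hω

lemma arm_add_le_phi_mul_arm {p : ℝ} (hp : p ∈ Icc (0 : ℝ) 1) {S : Finset (ℤ × ℤ)} (h0 : 0 ∈ S)
    {L : ℕ} (hS : S ⊆ box L) (R : ℕ) :
    arm p (R + (L + 1)) ≤ squareLattice.phi p S 0 * arm p R := by
  have hdisj : Disjoint (S : Set (ℤ × ℤ)) (box (R + (L + 1)) : Set (ℤ × ℤ))ᶜ := by
    refine disjoint_compl_right_iff_subset.2 fun x hx => ?_
    have := mem_box.1 (hS hx)
    exact mem_box.2 (by omega)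
  refine (LabelledGraph.perc_real_connTo_le_sum_boundary hp h0 hdisj).trans ?_
  rw [LabelledGraph.phi, Finset.mul_sum, Finset.sum_mul]
  refine Finset.sum_le_sum fun z hz => mul_le_mul_of_nonneg_left ?_
    (mul_nonneg hp.1 measureReal_nonneg)
  refine perc_real_connTo_le_arm p fun b hb hbz => hb ?_
  obtain ⟨hzS, -, hadj⟩ := LabelledGraph.mem_boundary.1 hz
  have hz₂ := mem_box.1 (mem_box_succ_of_adj (hS hzS) hadj)
  rw [mem_box, Prod.fst_sub, Prod.snd_sub] at hbz
  exact mem_box.2 (by omega)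

/-! ### Planar duality -/

lemma sum_range_sub_mul_eq_zero {R : Type*} [CommRing R] {n : ℕ} {b d : ℕ → R} (h0 : b 0 = 0)
    (hn : b n = 0) (h : ∀ i, i + 1 < n → b (i + 1) * (d (i + 1) - d i) = 0) :
    ∑ i ∈ Finset.range n, (b (i + 1) - b i) * d i = 0 := by
  have hparts := Finset.sum_range_by_parts d (fun i => b (i + 1) - b i) n
  simp only [Finset.sum_range_sub, h0, hn, sub_zero, smul_eq_mul, mul_zero, zero_sub] at hparts
  simp only [mul_comm _ (d _), hparts, neg_eq_zero]
  refine Finset.sum_eq_zero fun i hi => ?_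
  rw [mul_comm, h i (by grind)]

-- Here `a` lives on the vertices of a square, and `d i j` on the dual vertex to the lower right of
-- the vertex `(i, j)`: in each pair of crossing edges, `a` or `d` is constant along its edge.
lemma sum_range_sub_mul_dual_eq_zero {R : Type*} [CommRing R] {n : ℕ} {a d : ℕ → ℕ → R}
    (hhor : ∀ i < n, ∀ j ≤ n, (a (i + 1) j - a i j) * (d i (j + 1) - d i j) = 0)
    (hver : ∀ i, i + 1 < n → ∀ j < n,
      (a (i + 1) (j + 1) - a (i + 1) j) * (d (i + 1) (j + 1) - d i (j + 1)) = 0)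
    (hleft : ∀ j < n, a 0 (j + 1) = a 0 j) (hright : ∀ j < n, a n (j + 1) = a n j)
    (hbot : ∀ i < n, d i 0 = 0) {j : ℕ} (hj : j ≤ n) :
    ∑ i ∈ Finset.range n, (a (i + 1) j - a i j) * d i (j + 1) = 0 := by
  have hrow (j : ℕ) (hj : j ≤ n) : ∑ i ∈ Finset.range n, (a (i + 1) j - a i j) * d i (j + 1)
      = ∑ i ∈ Finset.range n, (a (i + 1) j - a i j) * d i j :=
    Finset.sum_congr rfl fun i hi => by
      linear_combination hhor i (Finset.mem_range.1 hi) j hj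
  induction j with
  | zero =>
    rw [hrow 0 hj]
    exact Finset.sum_eq_zero fun i hi => by rw [hbot i (Finset.mem_range.1 hi), mul_zero]
  | succ j ih =>
    have hparts := sum_range_sub_mul_eq_zero (n := n) (b := fun i => a i (j + 1) - a i j)
      (d := fun i => d i (j + 1)) (sub_eq_zero.2 (hleft j hj)) (sub_eq_zero.2 (hright j hj))
      fun i hi => hver i hi j hj
    rw [hrow (j + 1) hj, ← ih (Nat.le_of_succ_le hj), ← sub_eq_zero, ← hparts,
      ← Finset.sum_sub_distrib]
    exact Finset.sum_congr rfl fun i _ => by ring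

lemma exists_crossing_boundary_edges (n : ℕ) {A F : Set (ℤ × ℤ)}
    (hleft : ∀ j : ℕ, j ≤ n → (0, (j : ℤ)) ∈ A) (hright : ∀ j : ℕ, ((n : ℤ), (j : ℤ)) ∉ A)
    (htop : ∀ i : ℕ, i < n → ((i : ℤ), (n : ℤ)) ∈ F) (hbot : ∀ i : ℕ, ((i : ℤ), -1) ∉ F) :
    ∃ x y x' y', squareLattice.Adj x y ∧ squareLattice.Adj x' y' ∧ x + y = x' + y' + (1, 1) ∧
      ¬(x ∈ A ↔ y ∈ A) ∧ ¬(x' ∈ F ↔ y' ∈ F) := by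
  classical
  by_contra hno
  have hmul {x y x' y' : ℤ × ℤ} (hxy : squareLattice.Adj x y) (hxy' : squareLattice.Adj x' y')
      (h : x + y = x' + y' + (1, 1)) : ((if y ∈ A then 1 else 0) - (if x ∈ A then 1 else 0) : ℤ)
        * ((if y' ∈ F then 1 else 0) - (if x' ∈ F then 1 else 0)) = 0 := by
    by_cases hA : x ∈ A ↔ y ∈ A
    · simp only [hA, sub_self, zero_mul]
    · have hF : x' ∈ F ↔ y' ∈ F := by
        by_contra hF
        exact hno ⟨x, y, x', y', hxy, hxy', h, hA, hF⟩
      simp only [hF, sub_self, mul_zero]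
  have hsum := sum_range_sub_mul_dual_eq_zero (n := n)
    (a := fun i j => if ((i : ℤ), (j : ℤ)) ∈ A then (1 : ℤ) else 0)
    (d := fun i j => if ((i : ℤ), (j : ℤ) - 1) ∈ F then (1 : ℤ) else 0)
    (fun i _ j _ => hmul (by simp [squareLattice_adj]) (by simp [squareLattice_adj])
      (by ext <;> push_cast [Prod.fst_add, Prod.snd_add] <;> ring))
    (fun i _ j _ => hmul (by simp [squareLattice_adj]) (by simp [squareLattice_adj])
      (by ext <;> push_cast [Prod.fst_add, Prod.snd_add] <;> ring))
    (fun j hj => by simp only [Nat.cast_zero, hleft (j + 1) hj, hleft j hj.le])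
    (fun j _ => by simp only [hright])
    (fun i _ => by simp only [Nat.cast_zero, zero_sub, hbot, if_false]) le_rfl
  have htele : ∑ i ∈ Finset.range n, ((if (((i + 1 : ℕ) : ℤ), (n : ℤ)) ∈ A then (1 : ℤ) else 0)
      - if ((i : ℤ), (n : ℤ)) ∈ A then 1 else 0) = 0 := by
    refine (Finset.sum_congr rfl fun i hi => ?_).trans hsum
    simp [htop i (Finset.mem_range.1 hi)]
  rw [Finset.sum_range_sub (fun i : ℕ => if ((i : ℤ), (n : ℤ)) ∈ A then (1 : ℤ) else 0)] at htele
  simp [hleft n le_rfl, hright n] at htele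

/-- The dual configuration of `ω`: a dual edge is open if and only if the edge which it crosses is
closed. The vertex `v` of the dual lattice stands for the point `v + (1/2, 1/2)`, so that the dual
edge with label `e` crosses the edge with label `e + (1, 1)`. -/
def dual (ω : ℤ × ℤ → Bool) : ℤ × ℤ → Bool := fun e => !ω (e + (1, 1))

lemma measurable_dual : Measurable dual :=
  measurable_pi_lambda _ fun _ => (Measurable.of_discrete (f := not)).comp (measurable_pi_apply _)

lemma coin_half_map_not : (coin (1 / 2)).map not = coin (1 / 2) := by
  have : IsProbabilityMeasure ((coin (1 / 2)).map not) :=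
    Measure.isProbabilityMeasure_map Measurable.of_discrete.aemeasurable
  have hpre : not ⁻¹' {true} = {false} := by ext b; simp
  refine measure_bool_ext ?_
  rw [map_measureReal_apply .of_discrete .of_discrete, hpre, coin_real_false (by norm_num),
    coin_real_true (by norm_num)]
  norm_num

lemma perc_half_map_dual : (perc (ℤ × ℤ) (1 / 2)).map dual = perc (ℤ × ℤ) (1 / 2) := by
  have hcomp : dual = (fun ω e => !ω e) ∘ fun ω e => ω (e + (1, 1)) := rfl
  rw [hcomp, ← Measure.map_map (by fun_prop) (by fun_prop),
    Measure.map_infinitePi_infinitePi_of_inj (add_left_injective _),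
    Measure.infinitePi_map_pi _ fun _ => .of_discrete]
  exact congrArg _ (funext fun _ => coin_half_map_not)

theorem exists_crossing_or_exists_dual_crossing (ω : ℤ × ℤ → Bool) (n : ℕ) :
    (∃ j ∈ Finset.range (n + 1), ω ∈ squareLattice.connTo univ {v | v.1 = n} (0, (j : ℤ))) ∨
      ∃ i ∈ Finset.range n, dual ω ∈ squareLattice.connTo univ {v | v.2 = -1} (i, n) := by
  by_contra! hno
  obtain ⟨x, y, x', y', hxy, hxy', hcross, hA, hF⟩ := exists_crossing_boundary_edges n
    (A := ⋃ s ∈ {v : ℤ × ℤ | ∃ j ∈ Finset.range (n + 1), (0, (j : ℤ)) = v},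
      squareLattice.openCluster ω s)
    (F := ⋃ t ∈ {v : ℤ × ℤ | ∃ i ∈ Finset.range n, ((i : ℤ), (n : ℤ)) = v},
      squareLattice.openCluster (dual ω) t)
    (fun j hj => mem_biUnion ⟨j, Finset.mem_range_succ_iff.2 hj, rfl⟩ .rfl)
    (fun j h => by
      simp only [mem_iUnion₂, mem_ofPred_eq] at h
      obtain ⟨_, ⟨i, hi, rfl⟩, h⟩ := h
      exact hno.1 i hi ⟨_, rfl, h⟩)
    (fun i hi => mem_biUnion ⟨i, Finset.mem_range.2 hi, rfl⟩ .rfl)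
    (fun i h => by
      simp only [mem_iUnion₂, mem_ofPred_eq] at h
      obtain ⟨_, ⟨j, hj, rfl⟩, h⟩ := h
      exact hno.2 j hj ⟨_, rfl, h⟩)
  cases ho : ω (x + y)
  · have hdual : dual ω (x' + y') = true := by rw [dual, ← hcross, ho, Bool.not_false]
    exact hF (LabelledGraph.mem_biUnion_openCluster_iff_of_adj
      ⟨hxy', mem_univ _, mem_univ _, hdual⟩)
  · exact hA (LabelledGraph.mem_biUnion_openCluster_iff_of_adj
      ⟨hxy, mem_univ _, mem_univ _, ho⟩)

lemma perc_real_dual_connTo_le_arm {n : ℕ} {v : ℤ × ℤ} {B : Set (ℤ × ℤ)}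
    (hB : ∀ b ∈ B, b - v ∉ box n) :
    (perc (ℤ × ℤ) (1 / 2)).real (dual ⁻¹' squareLattice.connTo univ B v) ≤ arm (1 / 2) n := by
  rw [← map_measureReal_apply measurable_dual LabelledGraph.measurableSet_connTo,
    perc_half_map_dual]
  exact perc_real_connTo_le_arm _ hB

lemma one_le_mul_arm_half (n : ℕ) : 1 ≤ (2 * n + 3) * arm (1 / 2) n := by
  set μ := perc (ℤ × ℤ) (1 / 2)
  have hcover : univ ⊆
      (⋃ j ∈ Finset.range (n + 1 + 1),
        squareLattice.connTo univ {v | v.1 = (n + 1 : ℕ)} (0, (j : ℤ))) ∪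
      ⋃ i ∈ Finset.range (n + 1),
        dual ⁻¹' squareLattice.connTo univ {v | v.2 = -1} ((i : ℤ), ((n + 1 : ℕ) : ℤ)) := by
    intro ω _
    obtain ⟨j, hj, h⟩ | ⟨i, hi, h⟩ := exists_crossing_or_exists_dual_crossing ω (n + 1)
    exacts [.inl (mem_biUnion hj h), .inr (mem_biUnion hi h)]
  calc (1 : ℝ) = μ.real univ := by simp
    _ ≤ _ := measureReal_mono hcover (measure_ne_top _ _)
    _ ≤ _ := measureReal_union_le _ _
    _ ≤ ∑ _j ∈ Finset.range (n + 1 + 1), arm (1 / 2) n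
        + ∑ _i ∈ Finset.range (n + 1), arm (1 / 2) n := by
      refine add_le_add
        ((measureReal_biUnion_finset_le _ _).trans (Finset.sum_le_sum fun j _ => ?_))
        ((measureReal_biUnion_finset_le _ _).trans (Finset.sum_le_sum fun i _ => ?_))
      · refine perc_real_connTo_le_arm _ fun b (hb : b.1 = _) h => ?_
        rw [mem_box, Prod.fst_sub, hb] at h
        omega
      · refine perc_real_dual_connTo_le_arm fun b (hb : b.2 = _) h => ?_
        rw [mem_box, Prod.snd_sub, hb] at h
        omega
    _ = (2 * n + 3) * arm (1 / 2) n := by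
      simp only [Finset.sum_const, Finset.card_range, nsmul_eq_mul]
      push_cast
      ring

/-! ### The supercritical phase of the square lattice -/

lemma one_le_of_forall_one_le_mul_pow {A B r : ℝ} (hr : 0 ≤ r)
    (h : ∀ m : ℕ, 1 ≤ (A * m + B) * r ^ m) : 1 ≤ r := by
  by_contra! hr1
  have hlim : Filter.Tendsto (fun m : ℕ => A * (m * r ^ m) + B * r ^ m) Filter.atTop
      (nhds (A * 0 + B * 0)) :=
    ((tendsto_self_mul_const_pow_of_lt_one hr hr1).const_mul A).add
      ((tendsto_pow_atTop_nhds_zero_of_lt_one hr hr1).const_mul B)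
  have := ge_of_tendsto' hlim fun m => (h m).trans_eq (by ring)
  norm_num at this

theorem one_le_phi_half {S : Finset (ℤ × ℤ)} (h0 : 0 ∈ S) :
    1 ≤ squareLattice.phi (1 / 2) S 0 := by
  obtain ⟨L, hL⟩ := exists_subset_box S
  have hphi : 0 ≤ squareLattice.phi (1 / 2) S 0 :=
    mul_nonneg (by norm_num) (Finset.sum_nonneg fun _ _ => measureReal_nonneg)
  have hdecay (m : ℕ) : arm (1 / 2) (m * (L + 1)) ≤ squareLattice.phi (1 / 2) S 0 ^ m := by
    induction m with
    | zero => simp [arm]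
    | succ m ih =>
      rw [Nat.succ_mul, pow_succ']
      exact (arm_add_le_phi_mul_arm (by norm_num) h0 hL _).trans
        (mul_le_mul_of_nonneg_left ih hphi)
  refine one_le_of_forall_one_le_mul_pow (A := 2 * (L + 1)) (B := 3) hphi fun m => ?_
  calc (1 : ℝ) ≤ (2 * ↑(m * (L + 1)) + 3) * arm (1 / 2) (m * (L + 1)) := one_le_mul_arm_half _
    _ ≤ (2 * ↑(m * (L + 1)) + 3) * squareLattice.phi (1 / 2) S 0 ^ m := by
      gcongr
      exact hdecay m
    _ = _ := by
      push_cast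
      ring

lemma one_sub_arm_le_exp {p : ℝ} (hp : p ∈ Ico (1 / 2 : ℝ) 1) (n : ℕ) :
    1 - arm p n ≤ Real.exp (-(2 * (p - 1 / 2))) := by
  have hsum (S : Finset (ℤ × ℤ)) (h0 : 0 ∈ S) : 2 ≤ ∑ z ∈ squareLattice.boundary S,
      (perc (ℤ × ℤ) (1 / 2)).real (squareLattice.conn S 0 z.1) := by
    have := one_le_phi_half h0
    rw [LabelledGraph.phi] at this
    linarith
  have hle := LabelledGraph.one_sub_perc_real_connTo_le_exp (G := squareLattice) (D := box (n + 1))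
    (B := (box n : Set (ℤ × ℤ))ᶜ) (by norm_num) hp.1 hp.2 (mem_box.2 (by simp))
    (fun x _ hx y hxy => mem_box_succ_of_adj (not_not.1 hx) hxy) fun S _ h0 => hsum S h0
  refine le_trans (sub_le_sub_left ?_ 1) hle
  exact measureReal_mono (LabelledGraph.connTo_mono (subset_univ _))

lemma iInter_connTo_compl_box :
    ⋂ n : ℕ, squareLattice.connTo univ (box n : Set (ℤ × ℤ))ᶜ 0
      = {ω | (squareLattice.openCluster ω 0).Infinite} := by
  ext ω
  refine ⟨fun hω hfin => ?_, fun hω => mem_iInter.2 fun n => ?_⟩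
  · obtain ⟨n, hn⟩ := exists_subset_box hfin.toFinset
    obtain ⟨v, hv, hconn⟩ := mem_iInter.1 hω n
    exact hv (hn (hfin.mem_toFinset.2 hconn))
  · obtain ⟨v, hconn, hv⟩ := Set.Infinite.exists_notMem_finset hω (box n)
    exact ⟨v, hv, hconn⟩

lemma measurableSet_infinite_openCluster :
    MeasurableSet {ω | (squareLattice.openCluster ω 0).Infinite} :=
  iInter_connTo_compl_box ▸ .iInter fun _ => LabelledGraph.measurableSet_connTo

lemma antitone_connTo_compl_box :
    Antitone fun n : ℕ => squareLattice.connTo univ (box n : Set (ℤ × ℤ))ᶜ 0 := by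
  refine fun m n hmn ω ⟨b, hb, hω⟩ => ⟨b, fun hbm => hb ?_, hω⟩
  have := mem_box.1 hbm
  exact mem_box.2 ⟨this.1.trans hmn, this.2.trans hmn⟩

theorem perc_infinite_openCluster_pos {p : ℝ} (hp : 1 / 2 < p) :
    0 < perc (ℤ × ℤ) p {ω | (squareLattice.openCluster ω 0).Infinite} := by
  set r := min p (3 / 4)
  have hr : 1 / 2 < r := lt_min hp (by norm_num)
  have harm (n : ℕ) : 1 - Real.exp (-(2 * (r - 1 / 2))) ≤ arm p n := by
    have hmono : arm r n ≤ arm p n := coinProduct_real_mono_of_isUpperSet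
      LabelledGraph.measurableSet_connTo LabelledGraph.isUpperSet_connTo fun _ => min_le_left _ _
    have := one_sub_arm_le_exp ⟨hr.le, (min_le_right _ _).trans_lt (by norm_num)⟩ n
    linarith
  have hlim := tendsto_measure_iInter_atTop (μ := perc (ℤ × ℤ) p)
    (fun n => LabelledGraph.measurableSet_connTo.nullMeasurableSet) antitone_connTo_compl_box
    ⟨0, measure_ne_top _ _⟩
  have hpos : 0 < 1 - Real.exp (-(2 * (r - 1 / 2))) := by
    rw [sub_pos, Real.exp_lt_one_iff]
    linarith
  calc 0 < ENNReal.ofReal (1 - Real.exp (-(2 * (r - 1 / 2)))) := ENNReal.ofReal_pos.2 hpos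
    _ ≤ _ := ge_of_tendsto' hlim fun n => ENNReal.ofReal_le_of_le_toReal (harm n)
    _ = _ := by rw [iInter_connTo_compl_box]

/-! ### Comparison of the slab with the square lattice -/

/-- The vertex of `ℤ³` at height `l` above `x`. -/
def above (x : ℤ × ℤ) (l : ℤ) : Vtx := (x.1, x.2, l)

/-- The labels of the four edges of the square lattice at `x`. -/
def incidentBonds (x : ℤ × ℤ) : Finset (ℤ × ℤ) :=
  {x + (x + (1, 0)), x + (x - (1, 0)), x + (x + (0, 1)), x + (x - (0, 1))}

/-- The two endpoints of the edge with label `m` of the square lattice; the labels of edges have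
exactly one odd coordinate. -/
def bondEnds (m : ℤ × ℤ) : Finset (ℤ × ℤ) :=
  {m / 2, m / 2 + if m.1 % 2 = 1 then (1, 0) else (0, 1)}

lemma card_incidentBonds (x : ℤ × ℤ) : (incidentBonds x).card = 4 := by
  simp only [incidentBonds, sub_eq_add_neg]
  rw [Finset.card_insert_of_notMem, Finset.card_insert_of_notMem, Finset.card_insert_of_notMem,
    Finset.card_singleton] <;> simp

lemma card_bondEnds (m : ℤ × ℤ) : (bondEnds m).card = 2 := by
  refine Finset.card_pair ?_
  split_ifs <;> simp

lemma add_mem_incidentBonds {x y : ℤ × ℤ} (hxy : squareLattice.Adj x y) :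
    x + y ∈ incidentBonds x := by
  rw [squareLattice_adj] at hxy
  simp only [incidentBonds, Finset.mem_insert, Finset.mem_singleton, Prod.ext_iff, Prod.fst_add,
    Prod.snd_add, Prod.fst_sub, Prod.snd_sub]
  omega

lemma mem_bondEnds_add {x y : ℤ × ℤ} (hxy : squareLattice.Adj x y) : x ∈ bondEnds (x + y) := by
  rw [squareLattice_adj] at hxy
  rw [bondEnds, Finset.mem_insert, Finset.mem_singleton, Prod.ext_iff, Prod.ext_iff]
  split_ifs with h <;>
    simp only [Prod.fst_add, Prod.snd_add, Prod.fst_div, Prod.snd_div, Prod.fst_ofNat,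
      Prod.snd_ofNat] at h ⊢ <;> omega

/-- The independent coins from which percolation on the slab and percolation on the square lattice
are both built: `inl (m, l)` decides the horizontal edge at height `l` above the edge with label `m`
of the square lattice; `inr (m, x, l)` is the share of that edge in the vertical edge between the
heights `l` and `l + 1` above its endpoint `x`. -/
abbrev SlabCoin : Type := ((ℤ × ℤ) × ℤ) ⊕ ((ℤ × ℤ) × (ℤ × ℤ) × ℤ)

/-- The density of each coin: `p` for the horizontal coins and `t` for the vertical ones. -/
def coinDensity (p t : ℝ) : SlabCoin → ℝ := Sum.elim (fun _ => p) fun _ => t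

/-- The horizontal coins above the edge with label `m` of the square lattice. -/
noncomputable def horizontalCoins (k : ℕ) (m : ℤ × ℤ) : Finset SlabCoin :=
  ({m} ×ˢ Finset.Icc 0 (k : ℤ)).map .inl

/-- The vertical coins contributed by the edge with label `m` of the square lattice. -/
noncomputable def verticalCoins (k : ℕ) (m : ℤ × ℤ) : Finset SlabCoin :=
  ({m} ×ˢ bondEnds m ×ˢ Finset.Ico 0 (k : ℤ)).map .inr

/-- The coins which decide the edge `e` of the slab. -/
def slabCoins (e : EdgeIdx) : Finset SlabCoin :=
  let x := (e.1.1, e.1.2.1)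
  match e.2 with
  | 0 => {.inl (x + (x + (1, 0)), e.1.2.2)}
  | 1 => {.inl (x + (x + (0, 1)), e.1.2.2)}
  | 2 => (incidentBonds x ×ˢ {(x, e.1.2.2)}).map .inr

/-- The slab configuration: an edge is open if at least one of its coins shows `true`. -/
def slabConfig (c : SlabCoin → Bool) : Config := fun e =>
  decide (c ∈ {c | ∃ i ∈ slabCoins e, c i = true})

/-- The square lattice configuration: an edge is open if some horizontal coin above it and all the
vertical coins which it contributes show `true`, so that its endpoints are joined in the slab. -/
noncomputable def planarConfig (k : ℕ) (c : SlabCoin → Bool) : ℤ × ℤ → Bool := fun m =>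
  decide (c ∈ {c | ∃ i ∈ horizontalCoins k m, c i = true} ∩
    {c | ∀ i ∈ verticalCoins k m, c i = true})

lemma slabConfig_eq_true {c : SlabCoin → Bool} {e : EdgeIdx} :
    slabConfig c e = true ↔ ∃ i ∈ slabCoins e, c i = true := decide_eq_true_iff

lemma planarConfig_eq_true {k : ℕ} {c : SlabCoin → Bool} {m : ℤ × ℤ} :
    planarConfig k c m = true ↔ (∃ l ∈ Finset.Icc 0 (k : ℤ), c (.inl (m, l)) = true) ∧
      ∀ x ∈ bondEnds m, ∀ l ∈ Finset.Ico 0 (k : ℤ), c (.inr (m, x, l)) = true := by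
  refine decide_eq_true_iff.trans <| and_congr (by simp [horizontalCoins])
    ⟨fun h x hx l hl => ?_, ?_⟩
  · exact h _ (Finset.mem_map_of_mem _ (by simp_all))
  · simp only [verticalCoins, mem_ofPred_eq, Finset.forall_mem_map, Finset.mem_product,
      Finset.mem_singleton]
    rintro h ⟨_, x, l⟩ ⟨rfl, hx, hl⟩
    exact h x hx l hl

lemma pairwise_disjoint_slabCoins :
    Pairwise fun e e' => Disjoint (slabCoins e : Set SlabCoin) (slabCoins e') := by
  rintro ⟨⟨a, b, l⟩, i⟩ ⟨⟨a', b', l'⟩, i'⟩ hne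
  refine Set.disjoint_left.2 fun j hj hj' => hne ?_
  fin_cases i <;> fin_cases i' <;>
    simp only [slabCoins, Finset.coe_singleton, mem_singleton_iff, Finset.coe_map,
      Finset.coe_product, mem_image, Function.Embedding.inr_apply, Prod.mk_add_mk] at hj hj' <;>
    grind

lemma measurable_slabConfig : Measurable slabConfig :=
  measurable_decide_mem fun _ => measurableSet_exists_eq_true _

lemma measurable_planarConfig (k : ℕ) : Measurable (planarConfig k) :=
  measurable_decide_mem fun _ =>
    (measurableSet_exists_eq_true _).inter (measurableSet_forall_eq _ true)

lemma map_slabConfig {p t : ℝ} (hp : p ∈ Icc (0 : ℝ) 1) (ht : t ∈ Icc (0 : ℝ) 1) (k : ℕ) :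
    (coinProduct (coinDensity p t)).map slabConfig = slabMeasure k p (1 - (1 - t) ^ 4) := by
  rw [slabMeasure, bernoulliProduct_eq_infinitePi]
  refine coinProduct_map_decide_mem (fun _ => measurableSet_exists_eq_true _)
    (fun _ => dependsOn_exists_eq_true _) pairwise_disjoint_slabCoins fun ⟨v, i⟩ => ?_
  rw [coinProduct_real_exists_eq_true]
  fin_cases i <;> simp [slabCoins, coinDensity, coin_real_true, hp, ht, card_incidentBonds]

lemma map_planarConfig {p t : ℝ} (hp : p ∈ Icc (0 : ℝ) 1) (ht : t ∈ Icc (0 : ℝ) 1) (k : ℕ) :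
    (coinProduct (coinDensity p t)).map (planarConfig k)
      = perc (ℤ × ℤ) ((1 - (1 - p) ^ (k + 1)) * t ^ (2 * k)) := by
  refine coinProduct_map_decide_mem
    (J := fun m => (horizontalCoins k m : Set SlabCoin) ∪ verticalCoins k m)
    (fun _ => (measurableSet_exists_eq_true _).inter (measurableSet_forall_eq _ true))
    (fun _ => dependsOn_inter (dependsOn_exists_eq_true _) (dependsOn_forall_eq _ true)) ?_
    fun m => ?_
  · intro m m' hne
    refine Set.disjoint_left.2 fun j hj hj' => ?_
    simp only [horizontalCoins, verticalCoins, Finset.coe_map, Finset.coe_product, mem_union,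
      mem_image, Function.Embedding.inl_apply, Function.Embedding.inr_apply] at hj hj'
    grind
  · rw [infinitePi_real_inter_of_disjoint (measurableSet_exists_eq_true _)
      (measurableSet_forall_eq _ true) (dependsOn_exists_eq_true _) (dependsOn_forall_eq _ true),
      coinProduct_real_exists_eq_true, coinProduct_real_forall_eq]
    · simp [horizontalCoins, verticalCoins, coinDensity, coin_real_true, hp, ht, card_bondEnds]
    · simp [horizontalCoins, verticalCoins, disjoint_left]

lemma openAdj_comm {k : ℕ} {η : Config} {v w : Vtx} : OpenAdj k η v w ↔ OpenAdj k η w v :=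
  exists_congr fun _ => or_comm

lemma mem_cluster_comm {k : ℕ} {η : Config} {v w : Vtx} : w ∈ cluster k η v ↔ v ∈ cluster k η w :=
  have := Std.Symm.mk (r := OpenAdj k η) fun _ _ => openAdj_comm.1
  Relation.ReflTransGen.stdSymm.iff _ _

lemma above_mem_cluster {k : ℕ} {η : Config} {x : ℤ × ℤ}
    (h : ∀ l ∈ Finset.Ico 0 (k : ℤ), η (above x l, 2) = true) {n : ℕ} (hn : n ≤ k) :
    above x n ∈ cluster k η (above x 0) := by
  induction n with
  | zero => exact .refl
  | succ n ih =>
    refine (ih (by omega)).tail ⟨2, .inl ⟨?_, ?_, h n (by simp; omega)⟩⟩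
    · simp [above, dvec]
    · simp only [IsEdge, InSlab, above, dvec, Prod.snd_add]
      omega

lemma exists_dvec_of_adj {x y : ℤ × ℤ} (hxy : squareLattice.Adj x y) :
    ∃ i ≠ 2, (∀ l, above y l = above x l + dvec i) ∨ ∀ l, above x l = above y l + dvec i := by
  rw [squareLattice_adj] at hxy
  by_cases h : x.1 = y.1
  · refine ⟨1, by decide, ?_⟩
    simp only [above, dvec, Prod.mk_add_mk, Prod.mk.injEq, add_zero, and_true, forall_const]
    omega
  · refine ⟨0, by decide, ?_⟩
    simp only [above, dvec, Prod.mk_add_mk, Prod.mk.injEq, add_zero, and_true, forall_const]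
    omega

lemma slabConfig_horizontal {c : SlabCoin → Bool} {x y : ℤ × ℤ} {l : ℤ} {i : Fin 3} (hi : i ≠ 2)
    (hxy : above y l = above x l + dvec i) (h : c (.inl (x + y, l)) = true) :
    slabConfig c (above x l, i) = true := by
  refine slabConfig_eq_true.2 ⟨_, ?_, h⟩
  simp only [above] at hxy
  fin_cases i <;> simp_all [slabCoins, above, dvec, Prod.ext_iff]

lemma slabConfig_vertical {c : SlabCoin → Bool} {x y : ℤ × ℤ} {l : ℤ} (hxy : squareLattice.Adj x y)
    (h : c (.inr (x + y, x, l)) = true) : slabConfig c (above x l, 2) = true :=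
  slabConfig_eq_true.2 ⟨_, Finset.mem_map_of_mem _ (by
    simpa [above] using add_mem_incidentBonds hxy), h⟩

lemma openAdj_above {k : ℕ} {c : SlabCoin → Bool} {x y : ℤ × ℤ} {l : ℤ}
    (hxy : squareLattice.Adj x y) (hl : l ∈ Finset.Icc 0 (k : ℤ)) (h : c (.inl (x + y, l)) = true) :
    OpenAdj k (slabConfig c) (above x l) (above y l) := by
  have hslab (z : ℤ × ℤ) : InSlab k (above z l) := Finset.mem_Icc.1 hl
  obtain ⟨i, hi, hy | hx⟩ := exists_dvec_of_adj hxy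
  · exact ⟨i, .inl ⟨hy l, ⟨hslab x, hy l ▸ hslab y⟩, slabConfig_horizontal hi (hy l) h⟩⟩
  · exact ⟨i, .inr ⟨hx l, ⟨hslab y, hx l ▸ hslab x⟩,
      slabConfig_horizontal hi (hx l) (add_comm x y ▸ h)⟩⟩

lemma above_mem_cluster_of_adj {k : ℕ} {c : SlabCoin → Bool} {x y : ℤ × ℤ}
    (hxy : squareLattice.Adj x y) (h : planarConfig k c (x + y) = true) :
    above y 0 ∈ cluster k (slabConfig c) (above x 0) := by
  obtain ⟨⟨l, hl, hlc⟩, hvert⟩ := planarConfig_eq_true.1 h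
  obtain ⟨n, rfl⟩ := Int.eq_ofNat_of_zero_le (Finset.mem_Icc.1 hl).1
  have hn : n ≤ k := by simpa using hl
  have hx : above x n ∈ cluster k (slabConfig c) (above x 0) :=
    above_mem_cluster (fun l hl => slabConfig_vertical hxy (hvert x (mem_bondEnds_add hxy) l hl)) hn
  have hy : above y n ∈ cluster k (slabConfig c) (above y 0) := by
    rw [add_comm] at hvert
    exact above_mem_cluster (fun l hl =>
      slabConfig_vertical hxy.symm (hvert y (mem_bondEnds_add hxy.symm) l hl)) hn
  exact (Relation.ReflTransGen.tail hx (openAdj_above hxy hl hlc)).trans (mem_cluster_comm.1 hy)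

lemma infinite_cluster_slabConfig {k : ℕ} {c : SlabCoin → Bool}
    (h : (squareLattice.openCluster (planarConfig k c) 0).Infinite) :
    (cluster k (slabConfig c) 0).Infinite := by
  have hinj : Function.Injective fun x => above x 0 := fun x y hxy => by
    simpa [above, Prod.ext_iff] using hxy
  refine (h.image hinj.injOn).mono ?_
  rintro _ ⟨x, hx, rfl⟩
  induction (SimpleGraph.reachable_iff_reflTransGen _ _).1 hx with
  | refl => exact .refl
  | tail h hadj ih =>
    exact (ih ((SimpleGraph.reachable_iff_reflTransGen _ _).2 h)).trans
      (above_mem_cluster_of_adj hadj.1 hadj.2.2.2)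

theorem theta_pos_of_half_lt {k : ℕ} {p t : ℝ} (hp : p ∈ Icc (0 : ℝ) 1) (ht : t ∈ Icc (0 : ℝ) 1)
    (h : 1 / 2 < (1 - (1 - p) ^ (k + 1)) * t ^ (2 * k)) : 0 < theta k p (1 - (1 - t) ^ 4) := by
  set μ := coinProduct (coinDensity p t)
  calc 0 < perc (ℤ × ℤ) _ {ω | (squareLattice.openCluster ω 0).Infinite} :=
        perc_infinite_openCluster_pos h
    _ = μ (planarConfig k ⁻¹' {ω | (squareLattice.openCluster ω 0).Infinite}) := by
        rw [← map_planarConfig hp ht, Measure.map_apply (measurable_planarConfig k)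
          measurableSet_infinite_openCluster]
    _ ≤ μ (slabConfig ⁻¹' {η | (cluster k η 0).Infinite}) :=
        measure_mono fun _ => infinite_cluster_slabConfig
    _ ≤ μ.map slabConfig {η | (cluster k η 0).Infinite} :=
        Measure.le_map_apply measurable_slabConfig.aemeasurable _
    _ = theta k p (1 - (1 - t) ^ 4) := by rw [map_slabConfig hp ht, theta]

/-! ### The critical value -/

lemma half_lt_of_pCrit_lt {k : ℕ} {p : ℝ} (hp : p ∈ Ioc (pCrit k) 1) :
    1 / 2 < 1 - (1 - p) ^ (k + 1) := by
  have hroot : ((1 / 2 : ℝ) ^ ((1 : ℝ) / (k + 1))) ^ (k + 1) = 1 / 2 := by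
    rw [one_div ((k : ℝ) + 1)]
    exact_mod_cast Real.rpow_inv_natCast_pow (by norm_num : (0 : ℝ) ≤ 1 / 2) k.succ_ne_zero
  have hlt : (1 - p) ^ (k + 1) < ((1 / 2 : ℝ) ^ ((1 : ℝ) / (k + 1))) ^ (k + 1) :=
    pow_lt_pow_left₀ (sub_lt_comm.1 hp.1) (sub_nonneg.2 hp.2) k.succ_ne_zero
  linarith

lemma pCrit_nonneg (k : ℕ) : 0 ≤ pCrit k :=
  sub_nonneg.2 (Real.rpow_le_one (by norm_num) (by norm_num) (by positivity))

lemma exists_forall_lt_mul_pow {a b : ℝ} (hab : a < b) (ha : 0 ≤ a) (n : ℕ) :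
    ∃ t₀ ∈ Ico (0 : ℝ) 1, ∀ t, t₀ ≤ t → a < b * t ^ n := by
  have hev : ∀ᶠ t in nhdsWithin (1 : ℝ) (Iio 1), a < b * t ^ n :=
    ((by fun_prop : Continuous fun t : ℝ => b * t ^ n).tendsto' 1 b (by simp)).eventually
      (lt_mem_nhds hab) |>.filter_mono nhdsWithin_le_nhds
  obtain ⟨t₀, ht₀, hlt⟩ :=
    ((Filter.eventually_mem_set.2 (Ico_mem_nhdsLT (zero_lt_one' ℝ))).and hev).exists
  exact ⟨t₀, ht₀, fun t ht => hlt.trans_le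
    (mul_le_mul_of_nonneg_left (pow_le_pow_left₀ ht₀.1 ht n) (ha.trans hab.le))⟩

lemma exists_one_sub_one_sub_pow_eq {t₀ q : ℝ} {n : ℕ} (hn : n ≠ 0) (ht₀ : t₀ ≤ 1)
    (hq : q ∈ Ioc (1 - (1 - t₀) ^ n) 1) : ∃ t ∈ Icc t₀ 1, 1 - (1 - t) ^ n = q := by
  have hcont : ContinuousOn (fun t : ℝ => 1 - (1 - t) ^ n) (Icc t₀ 1) := by fun_prop
  refine intermediate_value_Icc ht₀ hcont ⟨hq.1.le, ?_⟩
  simpa [hn] using hq.2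

lemma qc_le_of_forall_theta_pos {k : ℕ} {p q₀ : ℝ} (h0 : 0 ≤ q₀)
    (h : ∀ q ∈ Ioc q₀ 1, 0 < theta k p q) : qc k p ≤ q₀ := by
  refine Real.sSup_le (fun q ⟨hq, hθ⟩ => ?_) h0
  by_contra! hlt
  exact (h q ⟨hlt, hq.2⟩).ne' hθ

theorem qc_lt_one_general (k : ℕ) (p : ℝ) (hp : p ∈ Set.Ioc (pCrit k) 1) : qc k p < 1 := by
  obtain ⟨t₀, ⟨h0, h1⟩, ht₀⟩ :=
    exists_forall_lt_mul_pow (half_lt_of_pCrit_lt hp) (by norm_num) (2 * k)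
  have hp01 : p ∈ Icc (0 : ℝ) 1 := ⟨(pCrit_nonneg k).trans hp.1.le, hp.2⟩
  have hle : (1 - t₀) ^ 4 ≤ 1 := pow_le_one₀ (sub_nonneg.2 h1.le) (sub_le_self 1 h0)
  calc qc k p ≤ 1 - (1 - t₀) ^ 4 := by
        refine qc_le_of_forall_theta_pos (sub_nonneg.2 hle) fun q hq => ?_
        obtain ⟨t, ht, rfl⟩ := exists_one_sub_one_sub_pow_eq four_ne_zero h1.le hq
        exact theta_pos_of_half_lt hp01 ⟨h0.trans ht.1, ht.2⟩ (ht₀ t ht.1)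
    _ < 1 := sub_lt_self 1 (pow_pos (sub_pos.2 h1) 4)

/-- **Lemma 2**, first part: for every `p ∈ (p_k, 1/2]`, `q_c(p) < 1`. -/
theorem qc_lt_one (k : ℕ) (p : ℝ) (hp : p ∈ Set.Ioc (pCrit k) (1 / 2)) :
    qc k p < 1 :=
  qc_lt_one_general k p ⟨hp.1, hp.2.trans (by norm_num)⟩

end AnisoSlab
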